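/- arXiv:math-ph/0511024 — 9 statements merged into one kernel-verified Lean document; each statement's English description precedes it below -/
import Mathlib

section
/- Let p, q ≥ 1 be integers and let N ≥ max(p, q) be an integer. Let φ_1, …, φ_{p+q} be complex numbers with Re φ_j < 0 for 1 ≤ j ≤ p and Re φ_l > 0 for p+1 ≤ l ≤ p+q. Then ∫_{U(N)} ∏_{j=1}^{p} det(1_N − e^{φ_j} u)^{-1} · ∏_{l=p+1}^{p+q} det(e^{φ_l}·1_N − ū)^{-1} du = e^{−N·∑_{l=p+1}^{p+q} φ_l} · ∏_{j=1}^{p} ∏_{l=p+1}^{p+q} (1 − e^{φ_j − φ_l})^{-1}. -/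
open MeasureTheory Matrix

noncomputable instance (N : ℕ) : MeasurableSpace (Matrix.unitaryGroup (Fin N) ℂ) := borel _
instance (N : ℕ) : BorelSpace (Matrix.unitaryGroup (Fin N) ℂ) := ⟨rfl⟩

/-! The traces of the symmetric powers of `diagonal y ⊗ₖ A` sum to `∏ j, det (1 - y j • A)⁻¹`, so
both products of reciprocal determinants are limits of traces of truncated symmetric powers.
Translation invariance of the measure, together with the Zariski density of the unitary group in
all matrices, gives the reproducing identity
`∫ F(u) tr Sym^{≤ d}(Aᵀ ⊗ u*) du = ∫ F(u* A u) du` for polynomials `F` of degree at most `d`.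
If `A = diagonal x` and `F` is a class function, letting `d → ∞` yields
`∫ F(u) ∏ i, det (1 - x i • u*)⁻¹ du = F(diagonal x)`. Taking for `F` the truncations of the
generating function in `y` gives the formula when there are as many `x i` as rows; fewer are padded
by zeros, and complex conjugation exchanges the roles of `x` and `y`. -/

open Filter MvPolynomial
open scoped Kronecker Topology

section Topology

variable {m n p q R X : Type*} [TopologicalSpace R] [TopologicalSpace X]

theorem continuous_vec : Continuous (vec : Matrix m n R → n × m → R) :=
  continuous_pi fun p ↦ continuous_id.matrix_elem p.2 p.1

theorem continuous_kronecker [Mul R] [ContinuousMul R] {A : X → Matrix m n R}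
    {B : X → Matrix p q R} (hA : Continuous A) (hB : Continuous B) :
    Continuous fun x ↦ A x ⊗ₖ B x :=
  continuous_matrix fun i j ↦ (hA.matrix_elem i.1 j.1).mul (hB.matrix_elem i.2 j.2)

end Topology

section SymmetricPower

variable {σ R S : Type*} [Fintype σ] [CommSemiring R] [CommSemiring S]

/-- Exponents of the monomials of degree at most `d` in the variables `σ`; they index the
truncated symmetric powers `symPowLE d`. -/
abbrev BoundedExponent (σ : Type*) (d : ℕ) : Type _ := {m : σ →₀ ℕ // m.degree ≤ d}

noncomputable instance (d : ℕ) : Fintype (BoundedExponent σ d) :=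
  (Finsupp.finite_of_degree_le d).fintype

/-- The Veronese vector of `z`: the values at `z` of all monomials of degree at most `d`. -/
def monomialVec (d : ℕ) (z : σ → R) : BoundedExponent σ d → R := fun m ↦ ∏ i, z i ^ m.1 i

/-- The coefficients of `F` at the monomials of degree at most `d`. -/
def coeffVec (d : ℕ) (F : MvPolynomial σ R) : BoundedExponent σ d → R := fun m ↦ coeff m.1 F

/-- The matrix of `⨁_{k ≤ d} Sym^k A` in the monomial basis: row `m` holds the coefficients of the
monomial `m` evaluated at the linear forms given by the rows of `A`. -/
noncomputable def symPowLE (d : ℕ) (A : Matrix σ σ R) :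
    Matrix (BoundedExponent σ d) (BoundedExponent σ d) R :=
  of fun m ↦ coeffVec d (∏ i, A.toMvPolynomial i ^ m.1 i)

theorem sum_coeffVec_mul {d : ℕ} {F : MvPolynomial σ R} (hF : F.totalDegree ≤ d)
    (g : (σ →₀ ℕ) → R) :
    ∑ m, coeffVec d F m * g m.1 = ∑ m ∈ F.support, coeff m F * g m := by
  classical
  have hsupp : F.support ⊆ (Finsupp.finite_of_degree_le d).toFinset := fun m hm ↦
    (Set.Finite.mem_toFinset _).2 ((le_totalDegree hm).trans hF)
  rw [Finset.sum_subset hsupp fun m _ hm ↦ by rw [notMem_support_iff.1 hm, zero_mul]]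
  exact (Finset.sum_subtype _ (by simp) fun m ↦ coeff m F * g m).symm

theorem eval_eq_coeffVec_dotProduct_monomialVec {d : ℕ} {F : MvPolynomial σ R}
    (hF : F.totalDegree ≤ d) (z : σ → R) : eval z F = coeffVec d F ⬝ᵥ monomialVec d z := by
  rw [eval_eq']
  exact (sum_coeffVec_mul hF fun m ↦ ∏ i, z i ^ m i).symm

theorem totalDegree_prod_toMvPolynomial_pow_le (A : Matrix σ σ R) (m : σ →₀ ℕ) :
    (∏ i, A.toMvPolynomial i ^ m i).totalDegree ≤ m.degree := by
  rw [Finsupp.degree_eq_sum]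
  refine IsHomogeneous.totalDegree_le (IsHomogeneous.prod _ _ _ fun i _ ↦ ?_)
  simpa using (A.toMvPolynomial_isHomogeneous i).pow (m i)

theorem symPowLE_mulVec_monomialVec (d : ℕ) (A : Matrix σ σ R) (z : σ → R) :
    symPowLE d A *ᵥ monomialVec d z = monomialVec d (A *ᵥ z) := by
  ext m
  have hdeg := (totalDegree_prod_toMvPolynomial_pow_le A m.1).trans m.2
  simpa [toMvPolynomial_eval_eq_apply, monomialVec, symPowLE, mulVec] using
    (eval_eq_coeffVec_dotProduct_monomialVec hdeg z).symm

theorem symPowLE_mul (d : ℕ) (A B : Matrix σ σ R) :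
    symPowLE d (A * B) = symPowLE d A * symPowLE d B := by
  ext m k
  have hdeg := (totalDegree_prod_toMvPolynomial_pow_le A m.1).trans m.2
  have hbind : ∏ i, (A * B).toMvPolynomial i ^ m.1 i =
      bind₁ B.toMvPolynomial (∏ i, A.toMvPolynomial i ^ m.1 i) := by
    simp only [map_prod, map_pow, ← toMvPolynomial_mul]
  calc coeff k.1 (∏ i, (A * B).toMvPolynomial i ^ m.1 i)
      = ∑ l ∈ (∏ i, A.toMvPolynomial i ^ m.1 i).support,
          coeff l (∏ i, A.toMvPolynomial i ^ m.1 i) *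
            coeff k.1 (∏ i, B.toMvPolynomial i ^ l i) := by
        rw [hbind]
        conv_lhs => rw [(∏ i, A.toMvPolynomial i ^ m.1 i).as_sum]
        simp only [map_sum, bind₁_monomial, coeff_sum, coeff_C_mul]
        refine Finset.sum_congr rfl fun l _ ↦ ?_
        rw [Finset.prod_subset l.support.subset_univ fun i _ hi ↦ by
          rw [Finsupp.notMem_support_iff.1 hi, pow_zero]]
    _ = (symPowLE d A * symPowLE d B) m k :=
        (sum_coeffVec_mul hdeg fun l ↦ coeff k.1 (∏ i, B.toMvPolynomial i ^ l i)).symm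

theorem symPowLE_map (d : ℕ) (f : R →+* S) (A : Matrix σ σ R) :
    symPowLE d (A.map f) = (symPowLE d A).map f := by
  ext m k
  simp [symPowLE, coeffVec, toMvPolynomial_map, ← map_pow, ← map_prod, coeff_map]

theorem eval_symPowLE_mvPolynomialX (d : ℕ) (A : Matrix σ σ R) (m k : BoundedExponent σ d) :
    eval (fun p ↦ A p.1 p.2) (symPowLE d (mvPolynomialX σ σ R) m k) = symPowLE d A m k := by
  have hgeneric : (mvPolynomialX σ σ R).map (eval fun p ↦ A p.1 p.2) = A := by ext; simp
  conv_rhs => rw [← hgeneric, symPowLE_map]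
  rfl

theorem continuous_monomialVec [TopologicalSpace R] [IsTopologicalSemiring R] (d : ℕ) :
    Continuous (monomialVec d : (σ → R) → _) :=
  continuous_pi fun _ ↦ by simp only [monomialVec]; fun_prop

theorem continuous_symPowLE [TopologicalSpace R] [IsTopologicalSemiring R] (d : ℕ) :
    Continuous (symPowLE d : Matrix σ σ R → _) := by
  refine continuous_matrix fun m k ↦ ?_
  simp only [fun A : Matrix σ σ R ↦ (eval_symPowLE_mvPolynomialX d A m k).symm]
  exact (MvPolynomial.continuous_eval _).comp (by fun_prop)

theorem exists_eval_vec_eq_trace_symPowLE_kronecker {ι n : Type*} [Fintype ι] [Fintype n] (d : ℕ)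
    (B : Matrix ι ι R) :
    ∃ F : MvPolynomial (n × n) R,
      ∀ A : Matrix n n R, eval (vec A) F = trace (symPowLE d (B ⊗ₖ A)) := by
  refine ⟨trace (symPowLE d (B.map C ⊗ₖ (mvPolynomialX n n R)ᵀ)), fun A ↦ ?_⟩
  have hgeneric : (B.map C ⊗ₖ (mvPolynomialX n n R)ᵀ).map (eval (vec A)) = B ⊗ₖ A := by
    ext p q
    simp [kroneckerMap_apply]
  rw [AddMonoidHom.map_trace, ← hgeneric, symPowLE_map]

theorem symPowLE_kronecker_mulVec_monomialVec_vec {m n : Type*} [Fintype m] [Fintype n] (d : ℕ)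
    (A : Matrix m m R) (B : Matrix n n R) (Z : Matrix m n R) :
    symPowLE d (B ⊗ₖ A) *ᵥ monomialVec d (vec Z) = monomialVec d (vec (A * Z * Bᵀ)) := by
  rw [symPowLE_mulVec_monomialVec, kronecker_mulVec_vec]

variable [DecidableEq σ]

theorem symPowLE_diagonal (d : ℕ) (z : σ → R) :
    symPowLE d (diagonal z) = diagonal (monomialVec d z) := by
  have hrow (i : σ) : (diagonal z).toMvPolynomial i = C (z i) * X i := by
    simp [toMvPolynomial, diagonal_apply, C_mul_X_eq_monomial, apply_ite]
  have hprod (m : σ →₀ ℕ) : ∏ i, (diagonal z).toMvPolynomial i ^ m i =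
      monomial m (∏ i, z i ^ m i) := by
    simp only [hrow, mul_pow, Finset.prod_mul_distrib, ← map_pow, ← map_prod]
    rw [monomial_eq, Finsupp.prod_fintype _ _ fun i ↦ pow_zero _]
  ext m k
  simp only [symPowLE, coeffVec, of_apply, hprod, coeff_monomial, diagonal_apply, Subtype.ext_iff,
    monomialVec]

theorem symPowLE_one (d : ℕ) : symPowLE d (1 : Matrix σ σ R) = 1 := by
  rw [← diagonal_one, symPowLE_diagonal, ← diagonal_one]
  congr 1
  ext m
  simp [monomialVec]

theorem trace_symPowLE_conj (d : ℕ) {V W : Matrix σ σ R} (h : W * V = 1) (A : Matrix σ σ R) :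
    trace (symPowLE d (V * A * W)) = trace (symPowLE d A) := by
  rw [symPowLE_mul, symPowLE_mul, trace_mul_cycle, ← symPowLE_mul, h, symPowLE_one, one_mul]

end SymmetricPower

section GeneratingFunction

theorem hasSum_and_summable_norm_prod_pi {ι κ R : Type*} [Fintype ι] [NormedCommRing R]
    [CompleteSpace R] {f : ι → κ → R} {a : ι → R} (hf : ∀ i, HasSum (f i) (a i))
    (hnorm : ∀ i, Summable fun k ↦ ‖f i k‖) :
    HasSum (fun m : ι → κ ↦ ∏ i, f i (m i)) (∏ i, a i) ∧
      Summable fun m : ι → κ ↦ ‖∏ i, f i (m i)‖ := by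
  let P (ι : Type _) [Fintype ι] : Prop := ∀ (f : ι → κ → R) (a : ι → R),
    (∀ i, HasSum (f i) (a i)) → (∀ i, Summable fun k ↦ ‖f i k‖) →
      HasSum (fun m : ι → κ ↦ ∏ i, f i (m i)) (∏ i, a i) ∧
        Summable fun m : ι → κ ↦ ‖∏ i, f i (m i)‖
  refine Fintype.induction_empty_option (P := P) ?_ ?_ ?_ ι f a hf hnorm
  · intro α β _ e ih f a hf hnorm
    let _ := Fintype.ofEquiv β e.symm
    have := ih (f ∘ e) (a ∘ e) (fun i ↦ hf (e i)) fun i ↦ hnorm (e i)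
    rw [← (Equiv.arrowCongr e (Equiv.refl κ)).hasSum_iff,
      ← (Equiv.arrowCongr e (Equiv.refl κ)).summable_iff]
    simpa [Function.comp_def, Equiv.arrowCongr, ← e.prod_comp] using this
  · exact fun f a _ _ ↦ ⟨by simp, Summable.of_finite⟩
  · intro α _ ih f a hf hnorm
    obtain ⟨hsum, hsummable⟩ := ih (f ∘ some) (a ∘ some) (fun i ↦ hf _) fun i ↦ hnorm _
    have hsplit (m : κ × (α → κ)) : ∏ i, f i ((Equiv.piOptionEquivProd (β := fun _ ↦ κ)).symm m i) =
        f none m.1 * ∏ i, f (some i) (m.2 i) := by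
      rw [Fintype.prod_option]; rfl
    rw [← (Equiv.piOptionEquivProd (β := fun _ ↦ κ)).symm.hasSum_iff,
      ← (Equiv.piOptionEquivProd (β := fun _ ↦ κ)).symm.summable_iff, Fintype.prod_option]
    simp only [Function.comp_def, hsplit]
    have hprod := summable_mul_of_summable_norm (hnorm none) hsummable
    have hmul := (hf none).mul hsum hprod
    have hmul_norm := (hnorm none).mul_norm hsummable
    exact ⟨hmul, hmul_norm⟩

variable {σ 𝕜 : Type*} [Fintype σ]

theorem hasSum_prod_pow [NormedField 𝕜] [CompleteSpace 𝕜] {z : σ → 𝕜} (hz : ∀ i, ‖z i‖ < 1) :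
    HasSum (fun m : σ →₀ ℕ ↦ ∏ i, z i ^ m i) (∏ i, (1 - z i)⁻¹) := by
  have hgeom (i : σ) : Summable fun k ↦ ‖z i ^ k‖ := by
    simpa only [norm_pow] using summable_geometric_of_lt_one (norm_nonneg _) (hz i)
  have hpi := (hasSum_and_summable_norm_prod_pi (f := fun i k ↦ z i ^ k)
    (fun i ↦ hasSum_geometric_of_norm_lt_one (hz i)) hgeom).1
  exact (Finsupp.equivFunOnFinite.hasSum_iff (f := fun m : σ → ℕ ↦ ∏ i, z i ^ m i)).2 hpi

variable [DecidableEq σ]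

theorem trace_symPowLE_diagonal [CommSemiring 𝕜] (d : ℕ) (z : σ → 𝕜) :
    trace (symPowLE d (diagonal z)) =
      ∑ m ∈ (Finsupp.finite_of_degree_le d).toFinset, ∏ i, z i ^ m i := by
  rw [symPowLE_diagonal, trace_diagonal]
  exact (Finset.sum_subtype _ (by simp) fun m : σ →₀ ℕ ↦ ∏ i, z i ^ m i).symm

theorem tendsto_trace_symPowLE_diagonal [NormedField 𝕜] [CompleteSpace 𝕜] {z : σ → 𝕜}
    (hz : ∀ i, ‖z i‖ < 1) :
    Tendsto (fun d ↦ trace (symPowLE d (diagonal z))) atTop (𝓝 (∏ i, (1 - z i)⁻¹)) := by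
  have hexhaust : Tendsto (fun d ↦ (Finsupp.finite_of_degree_le (σ := σ) d).toFinset)
      atTop atTop := by
    refine tendsto_atTop_finset_of_monotone (fun a b hab ↦ ?_) fun m ↦ ⟨m.degree, by simp⟩
    exact Set.Finite.toFinset_mono fun m hm ↦ le_trans hm hab
  simp only [trace_symPowLE_diagonal]
  exact (hasSum_prod_pow hz).comp hexhaust

theorem norm_trace_symPowLE_diagonal_le [NormedField 𝕜] {z : σ → 𝕜} {r : σ → ℝ}
    (hzr : ∀ i, ‖z i‖ ≤ r i) (hr : ∀ i, r i < 1) (d : ℕ) :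
    ‖trace (symPowLE d (diagonal z))‖ ≤ ∏ i, (1 - r i)⁻¹ := by
  have hr0 (i : σ) : 0 ≤ r i := (norm_nonneg _).trans (hzr i)
  rw [trace_symPowLE_diagonal]
  calc ‖∑ m ∈ (Finsupp.finite_of_degree_le d).toFinset, ∏ i, z i ^ m i‖
      ≤ ∑ m ∈ (Finsupp.finite_of_degree_le d).toFinset, ∏ i, r i ^ m i := by
        refine (norm_sum_le _ _).trans (Finset.sum_le_sum fun m _ ↦ ?_)
        rw [norm_prod]
        simp only [norm_pow]
        gcongr with i
        exact hzr i
    _ ≤ ∏ i, (1 - r i)⁻¹ :=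
        sum_le_hasSum _ (fun m _ ↦ Finset.prod_nonneg fun i _ ↦ pow_nonneg (hr0 i) _) <|
          hasSum_prod_pow fun i ↦ by simpa [abs_of_nonneg (hr0 i)] using hr i

variable {ι n : Type*} [Fintype ι] [DecidableEq ι] [Fintype n] [DecidableEq n]

theorem det_one_sub_smul_conj_diagonal {R : Type*} [CommRing R] (y : R) (e : n → R)
    {V W : Matrix n n R} (h : W * V = 1) :
    det (1 - y • (V * diagonal e * W)) = ∏ i, (1 - y * e i) := by
  have hfactor : 1 - y • (V * diagonal e * W) = V * diagonal (fun i ↦ 1 - y * e i) * W := by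
    have hdiag : diagonal (fun i ↦ 1 - y * e i) = 1 - y • diagonal e := by
      rw [← diagonal_one, ← diagonal_smul, diagonal_sub]; rfl
    rw [hdiag, mul_sub, sub_mul, mul_one, mul_eq_one_comm.1 h, mul_smul_comm, smul_mul_assoc]
  rw [hfactor, det_mul_right_comm, mul_eq_one_comm.1 h, one_mul, det_diagonal]

theorem trace_symPowLE_diagonal_kronecker_conj {R : Type*} [CommSemiring R] (d : ℕ) (y : ι → R)
    {V W : Matrix n n R} (h : W * V = 1) (A : Matrix n n R) :
    trace (symPowLE d (diagonal y ⊗ₖ (V * A * W))) = trace (symPowLE d (diagonal y ⊗ₖ A)) := by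
  have hconj : diagonal y ⊗ₖ (V * A * W) =
      ((1 : Matrix ι ι R) ⊗ₖ V) * (diagonal y ⊗ₖ A) * ((1 : Matrix ι ι R) ⊗ₖ W) := by
    simp only [← mul_kronecker_mul, one_mul, mul_one]
  rw [hconj, trace_symPowLE_conj]
  rw [← mul_kronecker_mul, h, one_mul, one_kronecker_one]

variable [NormedField 𝕜] {y : ι → 𝕜} {e : n → 𝕜}
  {V W : Matrix n n 𝕜}

theorem tendsto_trace_symPowLE_kronecker_conj_diagonal [CompleteSpace 𝕜] (hy : ∀ j, ‖y j‖ < 1)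
    (he : ∀ i, ‖e i‖ ≤ 1) (h : W * V = 1) :
    Tendsto (fun d ↦ trace (symPowLE d (diagonal y ⊗ₖ (V * diagonal e * W)))) atTop
      (𝓝 (∏ j, (det (1 - y j • (V * diagonal e * W)))⁻¹)) := by
  simp only [trace_symPowLE_diagonal_kronecker_conj _ _ h, diagonal_kronecker_diagonal,
    det_one_sub_smul_conj_diagonal _ _ h, ← Finset.prod_inv_distrib, ← Fintype.prod_prod_type']
  refine tendsto_trace_symPowLE_diagonal fun p ↦ ?_
  rw [norm_mul]
  exact mul_lt_one_of_nonneg_of_lt_one_left (norm_nonneg _) (hy p.1) (he p.2)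

theorem norm_trace_symPowLE_kronecker_conj_diagonal_le (hy : ∀ j, ‖y j‖ < 1)
    (he : ∀ i, ‖e i‖ ≤ 1) (h : W * V = 1) (d : ℕ) :
    ‖trace (symPowLE d (diagonal y ⊗ₖ (V * diagonal e * W)))‖ ≤
      ∏ p : ι × n, (1 - ‖y p.1‖)⁻¹ := by
  rw [trace_symPowLE_diagonal_kronecker_conj _ _ h, diagonal_kronecker_diagonal]
  refine norm_trace_symPowLE_diagonal_le (r := fun p : ι × n ↦ ‖y p.1‖) (fun p ↦ ?_)
    (fun p ↦ hy p.1) d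
  rw [norm_mul]
  exact mul_le_of_le_one_right (norm_nonneg _) (he p.2)

end GeneratingFunction

section UnitaryGroup

variable {n : Type*} [Fintype n] [DecidableEq n]

theorem exists_eq_unitary_conj_diagonal_of_isHermitian {H : Matrix n n ℂ} (hH : H.IsHermitian) :
    ∃ (V : unitaryGroup n ℂ) (e : n → ℝ),
      H = V.1 * diagonal (fun i ↦ (e i : ℂ)) * star V.1 :=
  ⟨hH.eigenvectorUnitary, hH.eigenvalues, by
    simpa [Unitary.conjStarAlgAut_apply, Function.comp_def] using hH.spectral_theorem⟩

open scoped Matrix.Norms.L2Operator in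
theorem exists_isHermitian_exp_I_smul_eq (u : unitaryGroup n ℂ) :
    ∃ H : Matrix n n ℂ, H.IsHermitian ∧ NormedSpace.exp (Complex.I • H) = u.1 := by
  have hcont (f : ℂ → ℂ) : ContinuousOn f (spectrum ℂ u.1) :=
    (Matrix.finite_spectrum u.1).continuousOn f
  have hcont_image (f : ℂ → ℂ) (g : ℂ → ℂ) : ContinuousOn f (g '' spectrum ℂ u.1) :=
    ((Matrix.finite_spectrum u.1).image g).continuousOn f
  refine ⟨cfc (fun z : ℂ ↦ (z.arg : ℂ)) u.1, IsSelfAdjoint.cfc_arg _, ?_⟩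
  rw [← CFC.exp_eq_normedSpace_exp (𝕜 := ℂ), ← cfc_smul (hf := hcont _),
    ← cfc_comp' (hg := hcont_image _ _) (hf := hcont _)]
  conv_rhs => rw [← cfc_id' ℂ u.1]
  refine cfc_congr fun z hz ↦ ?_
  have hnorm : ‖z‖ = 1 := spectrum.norm_eq_one_of_unitary u.2 hz
  have hlog : Complex.I • (z.arg : ℂ) = Complex.log z := by
    simp [Complex.log, hnorm, mul_comm]
  rw [hlog, ← Complex.exp_eq_exp_ℂ, Complex.exp_log (by rw [← norm_ne_zero_iff, hnorm]; simp)]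

theorem exists_eq_unitary_conj_diagonal (u : unitaryGroup n ℂ) :
    ∃ (V : unitaryGroup n ℂ) (e : n → ℂ), (∀ i, ‖e i‖ = 1) ∧
      u.1 = V.1 * diagonal e * star V.1 := by
  obtain ⟨H, hH, hexp⟩ := exists_isHermitian_exp_I_smul_eq u
  obtain ⟨V, θ, rfl⟩ := exists_eq_unitary_conj_diagonal_of_isHermitian hH
  refine ⟨V, fun i ↦ Complex.exp (Complex.I * θ i), fun i ↦ ?_, ?_⟩
  · simp [mul_comm Complex.I, Complex.norm_exp_ofReal_mul_I]
  · have hV : V.1⁻¹ = star V.1 :=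
      inv_eq_left_inv (Unitary.coe_star_mul_self V)
    have hunit : IsUnit V.1 := (Unitary.toUnits V).isUnit
    rw [← hexp, ← smul_mul_assoc, ← mul_smul_comm, ← hV, exp_conj _ _ hunit,
      ← diagonal_smul, exp_diagonal]
    congr
    ext i
    simp [Pi.coe_exp, Complex.exp_eq_exp_ℂ]

instance compactSpace_unitaryGroup : CompactSpace (unitaryGroup n ℂ) := by
  refine isCompact_iff_compactSpace.1 <| IsCompact.of_isClosed_subset
    (isCompact_univ_pi fun _ ↦ isCompact_univ_pi fun _ ↦ isCompact_closedBall (0 : ℂ) 1)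
    isClosed_unitary fun U hU i _ j _ ↦ ?_
  simpa using entry_norm_bound_of_unitary hU i j

theorem infinite_setOf_norm_eq_one : {z : ℂ | ‖z‖ = 1}.Infinite := by
  have hsphere : {z : ℂ | ‖z‖ = 1} = Metric.sphere 0 1 := by ext; simp
  rw [hsphere]
  exact (isPreconnected_sphere (by simp) 0 1).infinite_of_nontrivial
    ⟨1, by simp, -1, by simp, by norm_num [Complex.ext_iff]⟩

theorem det_one_sub_smul_unitary_ne_zero {y : ℂ} (hy : ‖y‖ < 1) (u : unitaryGroup n ℂ) :
    det (1 - y • u.1) ≠ 0 := by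
  obtain ⟨V, e, he, hu⟩ := exists_eq_unitary_conj_diagonal u
  rw [hu, det_one_sub_smul_conj_diagonal y e (Unitary.coe_star_mul_self V)]
  refine Finset.prod_ne_zero_iff.2 fun i _ h ↦ hy.ne ?_
  simpa [he i] using congrArg norm (sub_eq_zero.1 h).symm

theorem continuous_prod_inv_det_one_sub_smul_unitary {ι : Type*} [Fintype ι] {y : ι → ℂ}
    (hy : ∀ j, ‖y j‖ < 1) :
    Continuous fun u : unitaryGroup n ℂ ↦ ∏ j, (det (1 - y j • u.1))⁻¹ :=
  continuous_finsetProd _ fun j _ ↦ Continuous.inv₀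
    (continuous_const.sub (continuous_subtype_val.const_smul (y j))).matrix_det
    (det_one_sub_smul_unitary_ne_zero (hy j))

theorem star_prod_inv_det_one_sub_smul {ι K : Type*} [Fintype ι] [Field K] [StarRing K]
    (y : ι → K) (A : Matrix n n K) :
    star (∏ j, (det (1 - y j • A))⁻¹) = ∏ j, (det (1 - star (y j) • star A))⁻¹ := by
  simp [star_prod, star_inv₀, ← det_conjTranspose, star_eq_conjTranspose]

end UnitaryGroup

section ZariskiDensity

theorem algHom_aeval_eq_eval {σ R A : Type*} [CommSemiring R] [CommSemiring A] [Algebra R A]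
    (f : A →ₐ[R] R) (x : σ → A) (P : MvPolynomial σ R) : f (aeval x P) = eval (f ∘ x) P := by
  rw [comp_aeval_apply, ← coe_aeval_eq_eval]
  rfl

variable {n : Type*} {P : MvPolynomial (n × n) ℂ}

theorem eval_vec_unitary_conj_diagonal_eq_zero [Fintype n] [DecidableEq n]
    (hP : ∀ u : unitaryGroup n ℂ, eval (vec u.1) P = 0)
    (V : unitaryGroup n ℂ) (z : n → ℂ) :
    eval (vec (V.1 * diagonal z * star V.1)) P = 0 := by
  set Q : MvPolynomial n ℂ := aeval (vec (V.1.map C * diagonal X *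
    (star V.1).map C)) P with hQ
  have heval (z : n → ℂ) :
      eval z Q = eval (vec (V.1 * diagonal z * star V.1)) P := by
    rw [hQ, ← coe_aeval_eq_eval, RingHom.coe_coe, algHom_aeval_eq_eval]
    congr
    ext ij
    simp [Matrix.mul_apply, diagonal_apply]
  have hzero : Q = 0 := by
    refine funext_set (fun _ ↦ {z : ℂ | ‖z‖ = 1}) (fun _ ↦ infinite_setOf_norm_eq_one)
      fun z hz ↦ ?_
    have hdiag : diagonal z ∈ unitaryGroup n ℂ := by
      rw [mem_unitaryGroup_iff, star_eq_conjTranspose, diagonal_conjTranspose,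
        diagonal_mul_diagonal, diagonal_eq_one]
      ext i
      have hi : ‖z i‖ = 1 := hz i trivial
      simp [Complex.mul_conj, Complex.normSq_eq_norm_sq, hi]
    rw [heval, map_zero]
    exact hP ⟨_, mul_mem (mul_mem V.2 hdiag) (Unitary.star_mem V.2)⟩
  rw [← heval, hzero, map_zero]

theorem eq_zero_of_eval_vec_isHermitian_eq_zero
    (hP : ∀ H : Matrix n n ℂ, H.IsHermitian → eval (vec H) P = 0) : P = 0 := by
  refine MvPolynomial.funext fun x ↦ ?_
  set M : Matrix n n ℂ := of fun i j ↦ x (j, i)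
  set H : selfAdjoint (Matrix n n ℂ) := realPart M
  set K : selfAdjoint (Matrix n n ℂ) := imaginaryPart M
  set Q : Polynomial ℂ := aeval (vec (H.1.map Polynomial.C +
    (Polynomial.X : Polynomial ℂ) • K.1.map Polynomial.C)) P with hQ
  have heval (t : ℂ) : Q.eval t = eval (vec (H.1 + t • K.1)) P := by
    rw [hQ, ← Polynomial.coe_aeval_eq_eval, algHom_aeval_eq_eval]
    congr
    ext ij
    simpa using mul_comm _ t
  -- `H + t • K` is Hermitian for real `t`, whereas `M` is its value at `t = I`.
  have hzero : Q = 0 := by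
    refine Polynomial.eq_zero_of_infinite_isRoot Q <|
      (Set.infinite_range_of_injective Complex.ofReal_injective).mono ?_
    rintro _ ⟨t, rfl⟩
    exact (heval t).trans (hP _ (H + t • K).2)
  have hM : vec (H.1 + Complex.I • K.1) = x := by
    rw [realPart_add_I_smul_imaginaryPart]
    rfl
  rw [← hM, ← heval, hzero, Polynomial.eval_zero, map_zero]

theorem eq_zero_of_eval_vec_unitary_eq_zero [Fintype n] [DecidableEq n]
    (hP : ∀ u : unitaryGroup n ℂ, eval (vec u.1) P = 0) : P = 0 := by
  refine eq_zero_of_eval_vec_isHermitian_eq_zero fun H hH ↦ ?_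
  obtain ⟨V, e, rfl⟩ := exists_eq_unitary_conj_diagonal_of_isHermitian hH
  exact eval_vec_unitary_conj_diagonal_eq_zero hP V _

theorem eq_of_dotProduct_monomialVec_unitary_eq [Fintype n] [DecidableEq n] {d : ℕ}
    {c c' : BoundedExponent (n × n) d → ℂ}
    (h : ∀ u : unitaryGroup n ℂ, c ⬝ᵥ monomialVec d (vec u.1) =
      c' ⬝ᵥ monomialVec d (vec u.1)) : c = c' := by
  set F : MvPolynomial (n × n) ℂ := ∑ m, monomial m.1 (c m - c' m) with hF
  have hzero : F = 0 := eq_zero_of_eval_vec_unitary_eq_zero fun u ↦ by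
    simpa [hF, eval_monomial, Finsupp.prod_fintype, dotProduct, monomialVec, sub_mul, sub_eq_zero]
      using h u
  ext m
  have hcoeff : coeff m.1 F = c m - c' m := by
    simp [hF, coeff_sum, coeff_monomial, ← Subtype.ext_iff]
  rw [← sub_eq_zero, ← hcoeff, hzero, coeff_zero]

end ZariskiDensity

section HaarIntegral

theorem integrable_of_continuous_of_compactSpace {X E : Type*} [TopologicalSpace X]
    [CompactSpace X] [MeasurableSpace X] [OpensMeasurableSpace X] [NormedAddCommGroup E]
    {μ : Measure X} [IsFiniteMeasureOnCompacts μ] {g : X → E} (hg : Continuous g) :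
    Integrable g μ :=
  hg.integrable_of_hasCompactSupport (HasCompactSupport.of_compactSpace g)

theorem integral_mul_row_dotProduct {α ι : Type*} [Fintype ι] [MeasurableSpace α] {μ : Measure α}
    {c : α → ℂ} {r : α → ι → ℂ} (h : ∀ i, Integrable (fun a ↦ c a * r a i) μ) (v : ι → ℂ) :
    (fun i ↦ ∫ a, c a * r a i ∂μ) ⬝ᵥ v = ∫ a, c a * (r a ⬝ᵥ v) ∂μ := by
  simp only [dotProduct, ← integral_mul_const, Finset.mul_sum, ← mul_assoc]
  exact (integral_finsetSum _ fun i _ ↦ (h i).mul_const _).symm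

variable {n : Type*} [Fintype n] [DecidableEq n]

theorem continuous_eval_vec_unitary (F : MvPolynomial (n × n) ℂ) :
    Continuous fun u : unitaryGroup n ℂ ↦ eval (vec u.1) F :=
  (MvPolynomial.continuous_eval F).comp (continuous_vec.comp continuous_subtype_val)

theorem continuous_eval_mul_symPowLE_unitary {d : ℕ} (F : MvPolynomial (n × n) ℂ)
    (A : Matrix n n ℂ) (m k : BoundedExponent (n × n) d) :
    Continuous fun u : unitaryGroup n ℂ ↦
      eval (vec u.1) F * symPowLE d (A ⊗ₖ star u.1) m k :=
  (continuous_eval_vec_unitary F).mul <| ((continuous_symPowLE d).comp <|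
    continuous_kronecker continuous_const continuous_subtype_val.star).matrix_elem m k

theorem continuous_monomialVec_mul_vecMul_symPowLE_unitary {d : ℕ} (A : Matrix n n ℂ)
    (c : BoundedExponent (n × n) d → ℂ) (m k : BoundedExponent (n × n) d) :
    Continuous fun u : unitaryGroup n ℂ ↦ monomialVec d (vec (star u.1 * A)) m *
      (c ᵥ* symPowLE d (u.1ᵀ ⊗ₖ (1 : Matrix n n ℂ))) k := by
  have hu : Continuous fun u : unitaryGroup n ℂ ↦ u.1 := continuous_subtype_val
  have hmonomial := (continuous_monomialVec d).comp
    (continuous_vec.comp (hu.star.matrix_mul (continuous_const (y := A))))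
  have hsymPow := (continuous_symPowLE d).comp
    (continuous_kronecker hu.matrix_transpose (continuous_const (y := (1 : Matrix n n ℂ))))
  exact ((continuous_apply m).comp hmonomial).mul
    ((continuous_apply k).comp (continuous_const.matrix_vecMul hsymPow))

variable [MeasurableSpace (unitaryGroup n ℂ)] [BorelSpace (unitaryGroup n ℂ)]
  (μ : Measure (unitaryGroup n ℂ))

section LeftInvariant

variable [IsFiniteMeasure μ] [μ.IsMulLeftInvariant] {d : ℕ} {F : MvPolynomial (n × n) ℂ}

/- Pairing both rows with the Veronese vector of a unitary `Z` and translating by `Z` identifies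
them; Zariski density of the unitary group then removes `Z`. -/
theorem integral_eval_mul_symPowLE_row (hF : F.totalDegree ≤ d) (A : Matrix n n ℂ)
    (m : BoundedExponent (n × n) d) :
    (fun k ↦ ∫ u : unitaryGroup n ℂ,
        eval (vec u.1) F * symPowLE d (Aᵀ ⊗ₖ star u.1) m k ∂μ) =
      fun k ↦ ∫ u : unitaryGroup n ℂ,
        monomialVec d (vec (star u.1 * A)) m * (coeffVec d F ᵥ* symPowLE d (u.1ᵀ ⊗ₖ 1)) k ∂μ := by
  refine eq_of_dotProduct_monomialVec_unitary_eq fun Z ↦ ?_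
  have hleft (u : unitaryGroup n ℂ) : symPowLE d (Aᵀ ⊗ₖ star u.1) m ⬝ᵥ monomialVec d (vec Z.1) =
      monomialVec d (vec (star u.1 * Z.1 * A)) m :=
    congrFun (symPowLE_kronecker_mulVec_monomialVec_vec d _ _ _) m
  have hright (u : unitaryGroup n ℂ) :
      (coeffVec d F ᵥ* symPowLE d (u.1ᵀ ⊗ₖ 1)) ⬝ᵥ monomialVec d (vec Z.1) =
        eval (vec (Z.1 * u.1)) F := by
    rw [← dotProduct_mulVec, symPowLE_kronecker_mulVec_monomialVec_vec, transpose_transpose,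
      one_mul, eval_eq_coeffVec_dotProduct_monomialVec hF]
  rw [integral_mul_row_dotProduct fun k ↦ integrable_of_continuous_of_compactSpace <|
      continuous_eval_mul_symPowLE_unitary F Aᵀ m k,
    integral_mul_row_dotProduct fun k ↦ integrable_of_continuous_of_compactSpace <|
      continuous_monomialVec_mul_vecMul_symPowLE_unitary A (coeffVec d F) m k,
    ← integral_mul_left_eq_self _ Z]
  have hcancel (u : unitaryGroup n ℂ) : star (Z * u).1 * Z.1 = star u.1 := by
    change star (Z.1 * u.1) * Z.1 = star u.1
    rw [star_mul, mul_assoc, Unitary.coe_star_mul_self, mul_one]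
  simp only [hleft, hright, hcancel]
  exact integral_congr_ae (.of_forall fun u ↦ mul_comm _ _)

theorem integral_eval_mul_trace_symPowLE (hF : F.totalDegree ≤ d) (A : Matrix n n ℂ) :
    ∫ u : unitaryGroup n ℂ, eval (vec u.1) F * trace (symPowLE d (Aᵀ ⊗ₖ star u.1)) ∂μ =
      ∫ u : unitaryGroup n ℂ, eval (vec (star u.1 * A * u.1)) F ∂μ := by
  have hrow (u : unitaryGroup n ℂ) : eval (vec (star u.1 * A * u.1)) F =
      ∑ m, monomialVec d (vec (star u.1 * A)) m *
        (coeffVec d F ᵥ* symPowLE d (u.1ᵀ ⊗ₖ 1)) m := by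
    change _ = monomialVec d (vec (star u.1 * A)) ⬝ᵥ (coeffVec d F ᵥ* symPowLE d (u.1ᵀ ⊗ₖ 1))
    rw [dotProduct_comm, ← dotProduct_mulVec, symPowLE_kronecker_mulVec_monomialVec_vec,
      transpose_transpose, one_mul, eval_eq_coeffVec_dotProduct_monomialVec hF]
  simp only [hrow, trace, diag_apply, Finset.mul_sum]
  rw [integral_finsetSum _ fun m _ ↦ integrable_of_continuous_of_compactSpace <|
      continuous_eval_mul_symPowLE_unitary F Aᵀ m m,
    integral_finsetSum _ fun m _ ↦ integrable_of_continuous_of_compactSpace <|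
      continuous_monomialVec_mul_vecMul_symPowLE_unitary A (coeffVec d F) m m]
  exact Finset.sum_congr rfl fun m _ ↦ congrFun (integral_eval_mul_symPowLE_row μ hF A m) m

end LeftInvariant

variable {μ} in
theorem tendsto_integral_mul_trace_symPowLE_unitary {ι : Type*} [Fintype ι] [DecidableEq ι]
    {g : unitaryGroup n ℂ → ℂ} (hg : Integrable g μ) {y : ι → ℂ} (hy : ∀ j, ‖y j‖ < 1)
    {v : unitaryGroup n ℂ → unitaryGroup n ℂ} (hv : Continuous v) :
    Tendsto (fun d ↦ ∫ u, g u * trace (symPowLE d (diagonal y ⊗ₖ (v u).1)) ∂μ) atTop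
      (𝓝 (∫ u, g u * ∏ j, (det (1 - y j • (v u).1))⁻¹ ∂μ)) := by
  have hcont (d : ℕ) : Continuous fun u ↦ trace (symPowLE d (diagonal y ⊗ₖ (v u).1)) :=
    ((continuous_symPowLE d).comp <| continuous_kronecker continuous_const <|
      continuous_subtype_val.comp hv).matrix_trace
  refine tendsto_integral_of_dominated_convergence
    (fun u ↦ ‖g u‖ * ∏ p : ι × n, (1 - ‖y p.1‖)⁻¹)
    (fun d ↦ hg.aestronglyMeasurable.mul (hcont d).aestronglyMeasurable)
    (hg.norm.mul_const _) (fun d ↦ .of_forall fun u ↦ ?_) (.of_forall fun u ↦ ?_)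
  all_goals
    obtain ⟨V, e, he, hu⟩ := exists_eq_unitary_conj_diagonal (v u)
    simp only [hu]
  · rw [norm_mul]
    gcongr
    exact norm_trace_symPowLE_kronecker_conj_diagonal_le hy (fun i ↦ (he i).le)
      (Unitary.coe_star_mul_self V) d
  · exact (tendsto_trace_symPowLE_kronecker_conj_diagonal hy (fun i ↦ (he i).le)
      (Unitary.coe_star_mul_self V)).const_mul _

section Autocorrelation

variable [IsProbabilityMeasure μ] [μ.IsMulLeftInvariant]

theorem integral_eval_mul_prod_inv_det_star {F : MvPolynomial (n × n) ℂ} {x : n → ℂ}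
    (hx : ∀ i, ‖x i‖ < 1)
    (hF : ∀ u : unitaryGroup n ℂ,
      eval (vec (star u.1 * diagonal x * u.1)) F = eval (vec (diagonal x)) F) :
    ∫ u : unitaryGroup n ℂ, eval (vec u.1) F * ∏ i, (det (1 - x i • star u.1))⁻¹ ∂μ =
      eval (vec (diagonal x)) F := by
  have hdominated : Tendsto (fun d ↦ ∫ u : unitaryGroup n ℂ, eval (vec u.1) F *
      trace (symPowLE d (diagonal x ⊗ₖ star u.1)) ∂μ) atTop
      (𝓝 (∫ u : unitaryGroup n ℂ, eval (vec u.1) F * ∏ i, (det (1 - x i • star u.1))⁻¹ ∂μ)) :=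
    tendsto_integral_mul_trace_symPowLE_unitary (integrable_of_continuous_of_compactSpace
      (continuous_eval_vec_unitary F)) hx (v := fun u ↦ u⁻¹) continuous_inv
  refine tendsto_nhds_unique hdominated (tendsto_const_nhds.congr' ?_)
  filter_upwards [eventually_ge_atTop F.totalDegree] with d hd
  have := integral_eval_mul_trace_symPowLE μ hd (diagonal x)
  simp only [hF, integral_const, probReal_univ, one_smul, diagonal_transpose] at this
  exact this.symm

theorem integral_prod_inv_det_mul_prod_inv_det_star_of_same_index {ι : Type*} [Fintype ι]
    {y : ι → ℂ} {x : n → ℂ} (hy : ∀ j, ‖y j‖ < 1) (hx : ∀ i, ‖x i‖ < 1) :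
    ∫ u : unitaryGroup n ℂ,
        (∏ j, (det (1 - y j • u.1))⁻¹) * ∏ i, (det (1 - x i • star u.1))⁻¹ ∂μ =
      ∏ j, ∏ i, (1 - y j * x i)⁻¹ := by
  classical
  have hlimit : Tendsto (fun d ↦ trace (symPowLE d (diagonal y ⊗ₖ diagonal x))) atTop
      (𝓝 (∏ j, ∏ i, (1 - y j * x i)⁻¹)) := by
    have := tendsto_trace_symPowLE_kronecker_conj_diagonal hy (fun i ↦ (hx i).le)
      (one_mul (1 : Matrix n n ℂ))
    simp only [det_one_sub_smul_conj_diagonal _ _ (one_mul (1 : Matrix n n ℂ)),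
      ← Finset.prod_inv_distrib] at this
    simpa only [one_mul, mul_one] using this
  have hintegrable : Integrable
      (fun u : unitaryGroup n ℂ ↦ ∏ i, (det (1 - x i • (u⁻¹).1))⁻¹) μ :=
    integrable_of_continuous_of_compactSpace <|
      (continuous_prod_inv_det_one_sub_smul_unitary hx).comp continuous_inv
  have hintegral (d : ℕ) : ∫ u : unitaryGroup n ℂ, (∏ i, (det (1 - x i • (u⁻¹).1))⁻¹) *
      trace (symPowLE d (diagonal y ⊗ₖ u.1)) ∂μ =
        trace (symPowLE d (diagonal y ⊗ₖ diagonal x)) := by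
    obtain ⟨F, hF⟩ := exists_eval_vec_eq_trace_symPowLE_kronecker (n := n) d (diagonal y)
    have hclass (u : unitaryGroup n ℂ) :
        eval (vec (star u.1 * diagonal x * u.1)) F = eval (vec (diagonal x)) F := by
      have hu : u.1 * star u.1 = 1 := Unitary.coe_mul_star_self u
      rw [hF, hF, trace_symPowLE_diagonal_kronecker_conj _ _ hu]
    have hreproduce := integral_eval_mul_prod_inv_det_star μ hx hclass
    simp only [hF, mul_comm (trace _)] at hreproduce
    exact hreproduce
  have hdominated := tendsto_integral_mul_trace_symPowLE_unitary hintegrable hy continuous_id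
  simp only [id, hintegral] at hdominated
  rw [tendsto_nhds_unique hlimit hdominated]
  exact integral_congr_ae (.of_forall fun u ↦ mul_comm _ _)

theorem integral_prod_inv_det_mul_prod_inv_det_star_of_card_le {ι κ : Type*} [Fintype ι]
    [Fintype κ] (hκ : Fintype.card κ ≤ Fintype.card n) {y : ι → ℂ} {x : κ → ℂ}
    (hy : ∀ j, ‖y j‖ < 1) (hx : ∀ l, ‖x l‖ < 1) :
    ∫ u : unitaryGroup n ℂ,
        (∏ j, (det (1 - y j • u.1))⁻¹) * ∏ l, (det (1 - x l • star u.1))⁻¹ ∂μ =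
      ∏ j, ∏ l, (1 - y j * x l)⁻¹ := by
  obtain ⟨f⟩ := Function.Embedding.nonempty_of_card_le hκ
  have hpad (g : ℂ → ℂ) (hg : g 0 = 1) :
      ∏ l, g (x l) = ∏ i, g (Function.extend f x 0 i) :=
    Fintype.prod_of_injective f f.injective _ _
      (fun i hi ↦ by rw [Function.extend_apply' _ _ _ hi, Pi.zero_apply, hg])
      fun l ↦ by rw [f.injective.extend_apply]
  have hnorm (i : n) : ‖Function.extend f x 0 i‖ < 1 := by
    by_cases hi : ∃ l, f l = i
    · obtain ⟨l, rfl⟩ := hi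
      rw [f.injective.extend_apply]
      exact hx l
    · simp [Function.extend_apply' _ _ _ hi]
  have hpad_det (u : unitaryGroup n ℂ) := hpad (fun z ↦ (det (1 - z • star u.1))⁻¹) (by simp)
  have hpad_factor (j : ι) := hpad (fun z ↦ (1 - y j * z)⁻¹) (by simp)
  simp only [hpad_det, hpad_factor]
  exact integral_prod_inv_det_mul_prod_inv_det_star_of_same_index μ hy hnorm

theorem integral_prod_inv_det_mul_prod_inv_det_star {ι κ : Type*} [Fintype ι] [Fintype κ]
    (hcard : min (Fintype.card ι) (Fintype.card κ) ≤ Fintype.card n) {y : ι → ℂ} {x : κ → ℂ}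
    (hy : ∀ j, ‖y j‖ < 1) (hx : ∀ l, ‖x l‖ < 1) :
    ∫ u : unitaryGroup n ℂ,
        (∏ j, (det (1 - y j • u.1))⁻¹) * ∏ l, (det (1 - x l • star u.1))⁻¹ ∂μ =
      ∏ j, ∏ l, (1 - y j * x l)⁻¹ := by
  rcases min_le_iff.1 hcard with hι | hκ
  · have hconj := integral_prod_inv_det_mul_prod_inv_det_star_of_card_le μ hι
      (y := star x) (x := star y) (by simpa using hx) (by simpa using hy)
    apply star_injective
    calc star (∫ u : unitaryGroup n ℂ,
          (∏ j, (det (1 - y j • u.1))⁻¹) * ∏ l, (det (1 - x l • star u.1))⁻¹ ∂μ)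
        = ∫ u : unitaryGroup n ℂ, (∏ l, (det (1 - star x l • u.1))⁻¹) *
            ∏ j, (det (1 - star y j • star u.1))⁻¹ ∂μ := by
          refine integral_conj.symm.trans (integral_congr_ae (.of_forall fun u ↦ ?_))
          change star (_ * _) = _
          rw [star_mul, star_prod_inv_det_one_sub_smul, star_prod_inv_det_one_sub_smul, star_star]
          rfl
      _ = ∏ l, ∏ j, (1 - star x l * star y j)⁻¹ := hconj
      _ = star (∏ j, ∏ l, (1 - y j * x l)⁻¹) := by
          rw [Finset.prod_comm]
          simp [star_prod, star_inv₀, mul_comm]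
  · exact integral_prod_inv_det_mul_prod_inv_det_star_of_card_le μ hκ hy hx

end Autocorrelation

end HaarIntegral

section ExponentialParameters

theorem prod_filter_val_lt {M : Type*} [CommMonoid M] {p q : ℕ} (g : Fin (p + q) → M) :
    ∏ j ∈ Finset.univ.filter (fun j : Fin (p + q) ↦ (j : ℕ) < p), g j =
      ∏ j, g (Fin.castAdd q j) := by
  rw [Finset.prod_filter, Fin.prod_univ_add]
  simp

@[to_additive]
theorem prod_filter_le_val {M : Type*} [CommMonoid M] {p q : ℕ} (g : Fin (p + q) → M) :
    ∏ l ∈ Finset.univ.filter (fun l : Fin (p + q) ↦ p ≤ (l : ℕ)), g l =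
      ∏ l, g (Fin.natAdd p l) := by
  rw [Finset.prod_filter, Fin.prod_univ_add]
  simp [fun j : Fin p ↦ not_le.2 j.2]

theorem det_smul_one_sub_map_star {n K : Type*} [Fintype n] [DecidableEq n] [Field K] [StarRing K]
    {a : K} (ha : a ≠ 0) (A : Matrix n n K) :
    det (a • 1 - A.map (starRingEnd K)) = a ^ Fintype.card n * det (1 - a⁻¹ • star A) := by
  have hfactor : a • 1 - A.map (starRingEnd K) = a • (1 - a⁻¹ • star A)ᵀ := by
    rw [transpose_sub, transpose_one, transpose_smul, smul_sub, smul_smul, mul_inv_cancel₀ ha,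
      one_smul]
    rfl
  rw [hfactor, det_smul, det_transpose]

theorem prod_inv_det_exp_smul_one_sub_map_star {n κ : Type*} [Fintype n] [DecidableEq n]
    [Fintype κ] (ψ : κ → ℂ) (A : Matrix n n ℂ) :
    ∏ l, (det (Complex.exp (ψ l) • 1 - A.map (starRingEnd ℂ)))⁻¹ =
      Complex.exp (-(Fintype.card n : ℂ) * ∑ l, ψ l) *
        ∏ l, (det (1 - Complex.exp (-ψ l) • star A))⁻¹ := by
  rw [Finset.mul_sum, Complex.exp_sum, ← Finset.prod_mul_distrib]
  refine Finset.prod_congr rfl fun l _ ↦ ?_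
  rw [det_smul_one_sub_map_star (Complex.exp_ne_zero _), mul_inv, ← Complex.exp_nat_mul,
    ← Complex.exp_neg, ← Complex.exp_neg, neg_mul]

end ExponentialParameters

theorem autocorrelation_reciprocals_charpoly_unitary_stable_general
    (N p q : ℕ) (hN : min p q ≤ N)
    (φ : Fin (p + q) → ℂ)
    (hφneg : ∀ j : Fin (p + q), (j : ℕ) < p → (φ j).re < 0)
    (hφpos : ∀ l : Fin (p + q), p ≤ (l : ℕ) → 0 < (φ l).re)
    (μ : Measure (Matrix.unitaryGroup (Fin N) ℂ))
    [μ.IsMulLeftInvariant] [IsProbabilityMeasure μ] :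
    (∫ u : Matrix.unitaryGroup (Fin N) ℂ,
      (∏ j ∈ Finset.univ.filter (fun j : Fin (p + q) => (j : ℕ) < p),
          (Matrix.det (1 - Complex.exp (φ j) • (u : Matrix (Fin N) (Fin N) ℂ)))⁻¹) *
        (∏ l ∈ Finset.univ.filter (fun l : Fin (p + q) => p ≤ (l : ℕ)),
          (Matrix.det (Complex.exp (φ l) • (1 : Matrix (Fin N) (Fin N) ℂ) -
            (u : Matrix (Fin N) (Fin N) ℂ).map (starRingEnd ℂ)))⁻¹) ∂μ)
    = Complex.exp (-(N : ℂ) *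
          ∑ l ∈ Finset.univ.filter (fun l : Fin (p + q) => p ≤ (l : ℕ)), φ l) *
        ∏ j ∈ Finset.univ.filter (fun j : Fin (p + q) => (j : ℕ) < p),
          ∏ l ∈ Finset.univ.filter (fun l : Fin (p + q) => p ≤ (l : ℕ)),
            (1 - Complex.exp (φ j - φ l))⁻¹ := by
  have hy (j : Fin p) : ‖Complex.exp (φ (Fin.castAdd q j))‖ < 1 := by
    simpa [Complex.norm_exp] using hφneg (Fin.castAdd q j) (by simp)
  have hx (l : Fin q) : ‖Complex.exp (-φ (Fin.natAdd p l))‖ < 1 := by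
    simpa [Complex.norm_exp] using hφpos (Fin.natAdd p l) (by simp)
  simp only [prod_filter_val_lt, prod_filter_le_val, sum_filter_le_val,
    prod_inv_det_exp_smul_one_sub_map_star, Fintype.card_fin, mul_left_comm _ (Complex.exp _),
    integral_const_mul]
  rw [integral_prod_inv_det_mul_prod_inv_det_star μ (by simpa using hN) hy hx]
  simp only [← Complex.exp_add, ← sub_eq_add_neg]

/-- **Non-compact sector, stable range** (Eq. 1.14): for `N ≥ max(p,q)` the
Haar-average over `U(N)` of a product of reciprocals of characteristic polynomials
is given by a single free-field term. -/
theorem autocorrelation_reciprocals_charpoly_unitary_stable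
    (N p q : ℕ) (hp : 1 ≤ p) (hq : 1 ≤ q) (hN : max p q ≤ N)
    (φ : Fin (p + q) → ℂ)
    (hφneg : ∀ j : Fin (p + q), (j : ℕ) < p → (φ j).re < 0)
    (hφpos : ∀ l : Fin (p + q), p ≤ (l : ℕ) → 0 < (φ l).re)
    (μ : Measure (Matrix.unitaryGroup (Fin N) ℂ))
    [μ.IsHaarMeasure] [IsProbabilityMeasure μ] :
    (∫ u : Matrix.unitaryGroup (Fin N) ℂ,
      (∏ j ∈ Finset.univ.filter (fun j : Fin (p + q) => (j : ℕ) < p),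
          (Matrix.det (1 - Complex.exp (φ j) • (u : Matrix (Fin N) (Fin N) ℂ)))⁻¹) *
        (∏ l ∈ Finset.univ.filter (fun l : Fin (p + q) => p ≤ (l : ℕ)),
          (Matrix.det (Complex.exp (φ l) • (1 : Matrix (Fin N) (Fin N) ℂ) -
            (u : Matrix (Fin N) (Fin N) ℂ).map (starRingEnd ℂ)))⁻¹) ∂μ)
    = Complex.exp (-(N : ℂ) *
          ∑ l ∈ Finset.univ.filter (fun l : Fin (p + q) => p ≤ (l : ℕ)), φ l) *
        ∏ j ∈ Finset.univ.filter (fun j : Fin (p + q) => (j : ℕ) < p),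
          ∏ l ∈ Finset.univ.filter (fun l : Fin (p + q) => p ≤ (l : ℕ)),
            (1 - Complex.exp (φ j - φ l))⁻¹ :=
  autocorrelation_reciprocals_charpoly_unitary_stable_general N p q (min_le_max.trans hN) φ hφneg
    hφpos μ
end

section
/- If g and h are two n×n complex matrices such that s − g†sg and s − h†sh are both positive definite, then s − (gh)†s(gh) is positive definite; that is, the set H_{p,q} is a semigroup under matrix multiplication. -/
open Matrix
open scoped ComplexOrder

/-- The signature matrix `s = diag(1,…,1,−1,…,−1)` with `p` entries `+1` and `q`
entries `−1`. -/
noncomputable def sMat (p q : ℕ) : Matrix (Fin (p + q)) (Fin (p + q)) ℂ :=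
  Matrix.diagonal (fun i => if (i : ℕ) < p then 1 else -1)

theorem sub_conjTranspose_mul_mul_mul {R k l m : Type*} [NonUnitalRing R] [StarRing R]
    [Fintype k] [Fintype l]
    (J : Matrix k k R) (K : Matrix l l R) (L : Matrix m m R)
    (g : Matrix k l R) (h : Matrix l m R) :
    L - (g * h)ᴴ * J * (g * h) = (L - hᴴ * K * h) + hᴴ * (K - gᴴ * J * g) * h := by
  simp only [conjTranspose_mul, Matrix.mul_sub, Matrix.sub_mul, Matrix.mul_assoc,
    sub_add_sub_cancel]

theorem Hpq_mul_mem_general {R k l m : Type*} [Ring R] [PartialOrder R] [StarRing R]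
    [AddLeftMono R] [Fintype k] [Fintype l] [Finite m]
    {J : Matrix k k R} {K : Matrix l l R} {L : Matrix m m R}
    {g : Matrix k l R} {h : Matrix l m R}
    (hg : (K - gᴴ * J * g).PosSemidef) (hh : (L - hᴴ * K * h).PosDef) :
    (L - (g * h)ᴴ * J * (g * h)).PosDef := by
  rw [sub_conjTranspose_mul_mul_mul J K L g h]
  exact hh.add_posSemidef (hg.conjTranspose_mul_mul_same h)

/-- The set `H_{p,q} = {h : s − h†sh > 0}` is a semigroup under matrix
multiplication. -/
theorem Hpq_mul_mem (p q : ℕ) (hp : 1 ≤ p) (hq : 1 ≤ q)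
    (g h : Matrix (Fin (p + q)) (Fin (p + q)) ℂ)
    (hg : (sMat p q - gᴴ * sMat p q * g).PosDef)
    (hh : (sMat p q - hᴴ * sMat p q * h).PosDef) :
    (sMat p q - (g * h)ᴴ * sMat p q * (g * h)).PosDef :=
  Hpq_mul_mem_general hg.posSemidef hh
end

section
/- If h is an n×n complex matrix such that s − h†sh is positive definite (i.e. h ∈ H_{p,q}), then h has no eigenvalue equal to 1; in particular the matrix 1_n − h is invertible. -/
open Matrix
open scoped ComplexOrder

/-!
If `h v = μ v` with `μ* μ = 1`, then the sesquilinear forms of `h† s h` and `s` take the same value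
at `(v, v)`. So the form of `s - h† s h` vanishes there, and definiteness forces `v = 0`.
-/

section Form

variable {m n o l R : Type*} [Fintype m] [Fintype n] [Fintype o] [Fintype l]

lemma star_dotProduct_conjTranspose_mul_mul_mulVec [NonUnitalSemiring R] [StarRing R]
    (B : Matrix m n R) (A : Matrix m o R) (C : Matrix o l R) (v : n → R) (w : l → R) :
    star v ⬝ᵥ (Bᴴ * A * C) *ᵥ w = star (B *ᵥ v) ⬝ᵥ A *ᵥ (C *ᵥ w) := by
  simp only [star_mulVec, dotProduct_mulVec, vecMul_vecMul, Matrix.mul_assoc]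

lemma star_dotProduct_sub_conjTranspose_mul_mul_mulVec_of_mulVec_eq_smul [CommRing R] [StarRing R]
    (A : Matrix n n R) {B : Matrix n n R} {μ : R} {v : n → R} (hv : B *ᵥ v = μ • v) :
    star v ⬝ᵥ (A - Bᴴ * A * B) *ᵥ v = (1 - star μ * μ) * (star v ⬝ᵥ A *ᵥ v) := by
  rw [sub_mulVec, dotProduct_sub, star_dotProduct_conjTranspose_mul_mul_mulVec, hv, star_smul,
    mulVec_smul, smul_dotProduct, dotProduct_smul, smul_eq_mul, smul_eq_mul]
  ring

lemma eq_zero_of_posDef_sub_conjTranspose_mul_mul_of_mulVec_eq_smul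
    [CommRing R] [PartialOrder R] [StarRing R] {A B : Matrix n n R}
    (hAB : (A - Bᴴ * A * B).PosDef) {μ : R} (hμ : μ ∈ unitary R) {v : n → R}
    (hv : B *ᵥ v = μ • v) : v = 0 := by
  by_contra hne
  refine (hAB.dotProduct_mulVec_pos hne).ne' ?_
  rw [star_dotProduct_sub_conjTranspose_mul_mul_mulVec_of_mulVec_eq_smul A hv,
    Unitary.star_mul_self_of_mem hμ, sub_self, zero_mul]

end Form

section Invertibility

variable {n K : Type*} [Fintype n] [DecidableEq n] [Field K]

lemma isUnit_algebraMap_sub_iff_forall_mulVec_eq_smul {A : Matrix n n K} {μ : K} :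
    IsUnit (algebraMap K (Matrix n n K) μ - A) ↔ ∀ v, A *ᵥ v = μ • v → v = 0 := by
  rw [← mulVec_injective_iff_isUnit, ← coe_mulVecLin, injective_iff_map_eq_zero]
  simp only [mulVecLin_apply, sub_mulVec, Algebra.algebraMap_eq_smul_one, smul_mulVec,
    one_mulVec, sub_eq_zero, eq_comm (a := μ • _)]

theorem Hpq_one_sub_invertible_general [PartialOrder K] [StarRing K] {s h : Matrix n n K}
    (hh : (s - hᴴ * s * h).PosDef) {μ : K} (hμ : μ ∈ unitary K) :
    (∀ v, h *ᵥ v = μ • v → v = 0) ∧ IsUnit (algebraMap K (Matrix n n K) μ - h) := by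
  have eq_zero : ∀ v, h *ᵥ v = μ • v → v = 0 := fun _ hv ↦
    eq_zero_of_posDef_sub_conjTranspose_mul_mul_of_mulVec_eq_smul hh hμ hv
  exact ⟨eq_zero, isUnit_algebraMap_sub_iff_forall_mulVec_eq_smul.mpr eq_zero⟩

end Invertibility

/-- An element `h ∈ H_{p,q}` has no eigenvalue equal to `1`; in particular
`1 − h` is invertible. -/
theorem Hpq_one_sub_invertible (p q : ℕ) (hp : 1 ≤ p) (hq : 1 ≤ q)
    (h : Matrix (Fin (p + q)) (Fin (p + q)) ℂ)
    (hh : (sMat p q - hᴴ * sMat p q * h).PosDef) :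
    (∀ v : Fin (p + q) → ℂ, h *ᵥ v = v → v = 0) ∧ IsUnit (1 - h) := by
  simpa only [one_smul, map_one] using Hpq_one_sub_invertible_general hh (one_mem _)
end

section
/- Let h ∈ H_{p,q} and set a_h = s(1_n + h)(1_n − h)^{-1}. Then a_h + s = 2s(1_n − h)^{-1}, the Hermitian matrix a_h + a_h† is positive definite, and det(a_h + s) ≠ 0; in other words, a_h ∈ ζ_s^+. -/
open Matrix
open scoped ComplexOrder

/-!
If `Aᴴ X + Y A` is positive definite then `A` is invertible, since the associated Hermitian form
vanishes on the kernel of `A`. For Hermitian `s`, put `a = s(1 + h)(1 - h)⁻¹`.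
* `s - hᴴ s h = (1 - h)ᴴ s + hᴴ s (1 - h)`, so `1 - h` is invertible;
* `(1 - h)ᴴ (a + aᴴ) (1 - h) = 2 (s - hᴴ s h)`, so `a + aᴴ` is positive definite;
* `a + aᴴ = s C + Cᴴ s` with `C = (1 + h)(1 - h)⁻¹`, so `s`, and hence `a + s = 2 s (1 - h)⁻¹`, is
  invertible.
-/

section Cayley

variable {n 𝕜 : Type*} [Fintype n] [DecidableEq n]

/-- The Cayley transform `a_h = s(1 + h)(1 - h)⁻¹` twisted by the matrix `s`. It is only meaningful
when `1 - h` is invertible, as `⁻¹` is zero on singular matrices. -/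
noncomputable def twistedCayley [CommRing 𝕜] (s h : Matrix n n 𝕜) : Matrix n n 𝕜 :=
  s * (1 + h) * (1 - h)⁻¹

section CommRing

variable [CommRing 𝕜] {s h : Matrix n n 𝕜}

lemma twistedCayley_mul_one_sub (hu : IsUnit (1 - h)) :
    twistedCayley s h * (1 - h) = s * (1 + h) :=
  nonsing_inv_mul_cancel_right _ _ ((isUnit_iff_isUnit_det _).mp hu)

lemma twistedCayley_add_self (hu : IsUnit (1 - h)) :
    twistedCayley s h + s = (2 : 𝕜) • (s * (1 - h)⁻¹) := by
  have hs : s * (1 - h) * (1 - h)⁻¹ = s :=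
    mul_nonsing_inv_cancel_right _ _ ((isUnit_iff_isUnit_det _).mp hu)
  calc twistedCayley s h + s
      = s * (1 + h) * (1 - h)⁻¹ + s * (1 - h) * (1 - h)⁻¹ := by rw [hs, twistedCayley]
    _ = (s * (1 + h) + s * (1 - h)) * (1 - h)⁻¹ := (add_mul _ _ _).symm
    _ = (2 : 𝕜) • (s * (1 - h)⁻¹) := by rw [two_smul]; noncomm_ring

lemma conjTranspose_mul_twistedCayley_add_conjTranspose_mul [StarRing 𝕜] (hs : s.IsHermitian)
    (hu : IsUnit (1 - h)) :
    (1 - h)ᴴ * (twistedCayley s h + (twistedCayley s h)ᴴ) * (1 - h) =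
      (2 : 𝕜) • (s - hᴴ * s * h) := by
  set a := twistedCayley s h
  have ha : a * (1 - h) = s * (1 + h) := twistedCayley_mul_one_sub hu
  calc (1 - h)ᴴ * (a + aᴴ) * (1 - h)
      = (1 - h)ᴴ * (a * (1 - h)) + (a * (1 - h))ᴴ * (1 - h) := by
        rw [conjTranspose_mul]; noncomm_ring
    _ = (1 - hᴴ) * (s * (1 + h)) + (1 + hᴴ) * s * (1 - h) := by
        simp only [ha, conjTranspose_mul, conjTranspose_add, conjTranspose_sub,
          conjTranspose_one, hs.eq]
    _ = (2 : 𝕜) • (s - hᴴ * s * h) := by rw [two_smul]; noncomm_ring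

end CommRing

variable [Field 𝕜] [PartialOrder 𝕜] [StarRing 𝕜] {s h : Matrix n n 𝕜}

lemma isUnit_of_posDef_conjTranspose_mul_add_mul {A X Y : Matrix n n 𝕜}
    (hA : (Aᴴ * X + Y * A).PosDef) : IsUnit A := by
  rw [isUnit_iff_isUnit_det, isUnit_iff_ne_zero]
  intro hdet
  obtain ⟨v, hv, hAv⟩ := exists_mulVec_eq_zero_iff.mpr hdet
  have hform : star v ⬝ᵥ ((Aᴴ * X + Y * A) *ᵥ v) = 0 := by
    rw [add_mulVec, dotProduct_add, ← mulVec_mulVec, ← mulVec_mulVec, dotProduct_mulVec _ Aᴴ,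
      ← star_mulVec, hAv, star_zero, zero_dotProduct, mulVec_zero, dotProduct_zero, add_zero]
  exact (hA.dotProduct_mulVec_pos hv).ne' hform

lemma isUnit_one_sub_of_posDef (hh : (s - hᴴ * s * h).PosDef) : IsUnit (1 - h) := by
  have hsplit : s - hᴴ * s * h = (1 - h)ᴴ * s + hᴴ * s * (1 - h) := by
    rw [conjTranspose_sub, conjTranspose_one]; noncomm_ring
  exact isUnit_of_posDef_conjTranspose_mul_add_mul (hsplit ▸ hh)

lemma isUnit_of_posDef_twistedCayley_add_conjTranspose (hs : s.IsHermitian)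
    (ha : (twistedCayley s h + (twistedCayley s h)ᴴ).PosDef) : IsUnit s := by
  have hsplit : twistedCayley s h + (twistedCayley s h)ᴴ =
      sᴴ * ((1 + h) * (1 - h)⁻¹) + ((1 + h) * (1 - h)⁻¹)ᴴ * s := by
    rw [twistedCayley, mul_assoc, conjTranspose_mul s, hs.eq]
  exact isUnit_of_posDef_conjTranspose_mul_add_mul (hsplit ▸ ha)

variable [StarOrderedRing 𝕜]

lemma posDef_twistedCayley_add_conjTranspose (hs : s.IsHermitian)
    (hh : (s - hᴴ * s * h).PosDef) :
    (twistedCayley s h + (twistedCayley s h)ᴴ).PosDef := by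
  have hu : IsUnit (1 - h) := isUnit_one_sub_of_posDef hh
  rw [← hu.posDef_star_left_conjugate_iff, star_eq_conjTranspose,
    conjTranspose_mul_twistedCayley_add_conjTranspose_mul hs hu]
  exact hh.smul two_pos

theorem cayley_mem_zeta_general (hs : s.IsHermitian) (hh : (s - hᴴ * s * h).PosDef) :
    s * (1 + h) * (1 - h)⁻¹ + s = (2 : 𝕜) • (s * (1 - h)⁻¹) ∧
    (s * (1 + h) * (1 - h)⁻¹ + (s * (1 + h) * (1 - h)⁻¹)ᴴ).PosDef ∧
    (s * (1 + h) * (1 - h)⁻¹ + s).det ≠ 0 := by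
  have hu : IsUnit (1 - h) := isUnit_one_sub_of_posDef hh
  have hadd : twistedCayley s h + s = (2 : 𝕜) • (s * (1 - h)⁻¹) := twistedCayley_add_self hu
  have hpos := posDef_twistedCayley_add_conjTranspose hs hh
  have hsu : IsUnit s := isUnit_of_posDef_twistedCayley_add_conjTranspose hs hpos
  have hunit : IsUnit (twistedCayley s h + s) := by
    rw [hadd]
    exact (hsu.mul (isUnit_nonsing_inv_iff.mpr hu)).smul (Units.mk0 (2 : 𝕜) two_ne_zero)
  exact ⟨hadd, hpos, ((isUnit_iff_isUnit_det _).mp hunit).ne_zero⟩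

end Cayley

lemma isHermitian_sMat (p q : ℕ) : (sMat p q).IsHermitian := by
  refine isHermitian_diagonal_of_self_adjoint _ (funext fun i => ?_)
  rw [Pi.star_apply]
  split_ifs <;> simp

/-- For `h ∈ H_{p,q}`, the Cayley transform `a_h = s(1+h)(1−h)⁻¹` satisfies
`a_h + s = 2s(1−h)⁻¹`, `a_h + a_h†` is positive definite and `det(a_h + s) ≠ 0`,
i.e. `a_h ∈ ζ_s⁺`. -/
theorem cayley_mem_zeta (p q : ℕ) (hp : 1 ≤ p) (hq : 1 ≤ q)
    (h : Matrix (Fin (p + q)) (Fin (p + q)) ℂ)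
    (hh : (sMat p q - hᴴ * sMat p q * h).PosDef) :
    sMat p q * (1 + h) * (1 - h)⁻¹ + sMat p q = (2 : ℂ) • (sMat p q * (1 - h)⁻¹) ∧
    (sMat p q * (1 + h) * (1 - h)⁻¹ + (sMat p q * (1 + h) * (1 - h)⁻¹)ᴴ).PosDef ∧
    (sMat p q * (1 + h) * (1 - h)⁻¹ + sMat p q).det ≠ 0 := by
  exact cayley_mem_zeta_general (isHermitian_sMat p q) hh
end

section
/- The set ζ_s^+ = {X an n×n complex matrix : X + X† is positive definite and det(X + s) ≠ 0} is a connected subset of the space of n×n complex matrices. -/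
open Matrix
open scoped ComplexOrder

/-!
Two points of a convex open set `U` in a complex vector space span a complex line. When the zero
set of `X ↦ det (X + s)` meets that line in finitely many points, the two points are joined inside
`U` by an arc of the line that bypasses them: a line has two real dimensions. On the line through
`X` and `Y` the determinant is a polynomial, nonzero because it does not vanish at `X`.
-/

open Set Filter Topology AffineMap

section Arc

/-- The parabolic arc of slope `c` from `0` to `1` in `ℂ`. Arcs of different slopes meet only at
their endpoints, so that a countable set avoiding the endpoints meets only countably many arcs. -/
def parabolicArc (c t : ℝ) : ℂ := ⟨t, c * t * (1 - t)⟩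

lemma parabolicArc_zero (c : ℝ) : parabolicArc c 0 = 0 := by
  simp [parabolicArc, Complex.ext_iff]

lemma parabolicArc_one (c : ℝ) : parabolicArc c 1 = 1 := by
  simp [parabolicArc, Complex.ext_iff]

lemma continuous_parabolicArc (c : ℝ) : Continuous (parabolicArc c) :=
  Complex.equivRealProdCLM.symm.continuous.comp
    (continuous_id.prodMk (by fun_prop : Continuous fun t : ℝ => c * t * (1 - t)))

lemma exists_forall_parabolicArc_notMem {A : Set ℂ} (hA : A.Countable) (h0 : 0 ∉ A) (h1 : 1 ∉ A)
    {T : Set ℝ} (hT : T ∈ 𝓝 0) : ∃ c ∈ T, ∀ t, parabolicArc c t ∉ A := by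
  let slope : ℂ → ℝ := fun z => z.im / (z.re * (1 - z.re))
  obtain ⟨c, hc, hcT⟩ := ((hA.image slope).dense_compl ℝ).inter_nhds_nonempty hT
  refine ⟨c, hcT, fun t htA => hc ⟨_, htA, ?_⟩⟩
  have ht0 : t ≠ 0 := by
    rintro rfl
    exact h0 (parabolicArc_zero c ▸ htA)
  have ht1 : 1 - t ≠ 0 := by
    rw [sub_ne_zero]
    rintro rfl
    exact h1 (parabolicArc_one c ▸ htA)
  simp only [slope, parabolicArc]
  field_simp

variable {E : Type*} [AddCommGroup E] [Module ℝ E] [Module ℂ E] [IsScalarTower ℝ ℂ E]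

lemma lineMap_parabolicArc (x y : E) (c t : ℝ) :
    lineMap x y (parabolicArc c t) =
      lineMap (lineMap x (lineMap x y (c * Complex.I)) t) y t := by
  have harc : parabolicArc c t = t + (1 - t) * (t * (c * Complex.I)) := by
    apply Complex.ext
    · simp [parabolicArc]
    · simp [parabolicArc, mul_comm, mul_left_comm]
  simp only [lineMap_apply_module', harc]
  module

lemma lineMap_parabolicArc_mem {U : Set E} (hU : Convex ℝ U) {x y : E} (hx : x ∈ U) (hy : y ∈ U)
    {c t : ℝ} (hc : lineMap x y (c * Complex.I) ∈ U) (ht : t ∈ Icc (0 : ℝ) 1) :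
    lineMap x y (parabolicArc c t) ∈ U := by
  rw [lineMap_parabolicArc]
  exact hU.lineMap_mem (hU.lineMap_mem hx hc ht) hy ht

variable [TopologicalSpace E] [ContinuousAdd E] [ContinuousSMul ℂ E]

theorem joinedIn_diff_of_countable_preimage_lineMap {U Z : Set E} (hU : Convex ℝ U)
    (hUo : IsOpen U) {x y : E} (hx : x ∈ U \ Z) (hy : y ∈ U \ Z)
    (hZ : ((lineMap x y : ℂ →ᵃ[ℂ] E) ⁻¹' Z).Countable) : JoinedIn (U \ Z) x y := by
  have hline : Continuous (lineMap x y : ℂ → E) := by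
    simp only [coe_lineMap]
    fun_prop
  have hT : {c : ℝ | lineMap x y (c * Complex.I) ∈ U} ∈ 𝓝 0 :=
    (hUo.preimage (hline.comp (by fun_prop : Continuous fun c : ℝ => c * Complex.I))).mem_nhds
      (by simpa using hx.1)
  obtain ⟨c, hc, hcZ⟩ := exists_forall_parabolicArc_notMem hZ (by simpa using hx.2)
    (by simpa using hy.2) hT
  refine JoinedIn.ofLine (f := fun t => lineMap x y (parabolicArc c t))
    (hline.comp (continuous_parabolicArc c)).continuousOn
    (by simp [parabolicArc_zero]) (by simp [parabolicArc_one]) ?_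
  rintro _ ⟨t, ht, rfl⟩
  exact ⟨lineMap_parabolicArc_mem hU hx.1 hy.1 hc ht, hcZ t⟩

end Arc

section Accretive

variable {n 𝕜 : Type*} [RCLike 𝕜]

variable (n 𝕜) in
/-- The set of strictly accretive matrices: those with positive definite Hermitian part
(the factor `1 / 2` is omitted). -/
def accretiveMatrices : Set (Matrix n n 𝕜) := {X | (X + Xᴴ).PosDef}

lemma convex_accretiveMatrices : Convex ℝ (accretiveMatrices n 𝕜) := by
  refine convex_iff_forall_pos.mpr fun X hX Y hY a b ha hb _ => ?_
  have hsum : (a • X + b • Y) + (a • X + b • Y)ᴴ = a • (X + Xᴴ) + b • (Y + Yᴴ) := by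
    simp only [conjTranspose_add, conjTranspose_smul, star_trivial, smul_add]
    abel
  rw [accretiveMatrices, mem_ofPred_eq, hsum]
  exact (PosDef.smul hX ha).add (PosDef.smul hY hb)

lemma dotProduct_add_conjTranspose_mulVec [Fintype n] (X : Matrix n n 𝕜) (v : n → 𝕜) :
    star v ⬝ᵥ (X + Xᴴ) *ᵥ v = ((2 * RCLike.re (star v ⬝ᵥ X *ᵥ v) : ℝ) : 𝕜) := by
  have hadj : star v ⬝ᵥ Xᴴ *ᵥ v = star (star v ⬝ᵥ X *ᵥ v) := by
    rw [dotProduct_mulVec, ← star_mulVec, star_dotProduct]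
  rw [add_mulVec, dotProduct_add, hadj, RCLike.star_def, RCLike.add_conj]
  push_cast
  rfl

lemma mem_accretiveMatrices_iff [Fintype n] {X : Matrix n n 𝕜} :
    X ∈ accretiveMatrices n 𝕜 ↔ ∀ v ≠ 0, 0 < RCLike.re (star v ⬝ᵥ X *ᵥ v) := by
  have hherm : (X + Xᴴ).IsHermitian := isHermitian_add_transpose_self X
  simp only [accretiveMatrices, mem_ofPred_eq, posDef_iff_dotProduct_mulVec, hherm, true_and,
    dotProduct_add_conjTranspose_mulVec, RCLike.ofReal_pos, Nat.ofNat_pos, mul_pos_iff_of_pos_left]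

lemma mem_accretiveMatrices_iff_sphere [Fintype n] {X : Matrix n n 𝕜} :
    X ∈ accretiveMatrices n 𝕜 ↔
      ∀ v ∈ Metric.sphere (0 : n → 𝕜) 1, 0 < RCLike.re (star v ⬝ᵥ X *ᵥ v) := by
  rw [mem_accretiveMatrices_iff]
  refine ⟨fun h v hv => h v (ne_zero_of_mem_unit_sphere ⟨v, hv⟩), fun h v hv => ?_⟩
  have hunit : ‖v‖⁻¹ • v ∈ Metric.sphere (0 : n → 𝕜) 1 := by
    simp [norm_smul, hv]
  have hpos := h _ hunit
  simp only [star_smul, star_trivial, mulVec_smul, dotProduct_smul, smul_dotProduct,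
    RCLike.smul_re] at hpos
  have hnorm : 0 < ‖v‖⁻¹ := by positivity
  exact pos_of_mul_pos_right (pos_of_mul_pos_right hpos hnorm.le) hnorm.le

lemma isOpen_accretiveMatrices [Finite n] : IsOpen (accretiveMatrices n 𝕜) := by
  have := Fintype.ofFinite n
  have hform : Continuous fun P : Matrix n n 𝕜 × (n → 𝕜) =>
      RCLike.re (star P.2 ⬝ᵥ P.1 *ᵥ P.2) := by
    fun_prop
  refine isOpen_iff_mem_nhds.mpr fun X hX => ?_
  rw [mem_accretiveMatrices_iff_sphere] at hX
  have hnear : ∀ᶠ Y in 𝓝 X, ∀ v ∈ Metric.sphere (0 : n → 𝕜) 1,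
      0 < RCLike.re (star v ⬝ᵥ Y *ᵥ v) :=
    (isCompact_sphere _ _).eventually_forall_of_forall_eventually fun v hv =>
      hform.continuousAt.eventually (lt_mem_nhds (hX v hv))
  exact hnear.mono fun Y hY => mem_accretiveMatrices_iff_sphere.mpr hY

end Accretive

section Pencil

variable {n : Type*} [Fintype n] [DecidableEq n]

lemma finite_setOf_det_smul_add_eq_zero {R : Type*} [CommRing R] [IsDomain R]
    (A : Matrix n n R) {B : Matrix n n R} (hB : B.det ≠ 0) :
    {z : R | (z • A + B).det = 0}.Finite := by
  let p : Polynomial R :=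
    ((Polynomial.X : Polynomial R) • A.map Polynomial.C + B.map Polynomial.C).det
  have hp : p ≠ 0 := fun h0 => hB <| by
    rw [← Polynomial.coeff_det_X_add_C_zero A B]
    exact congrArg (Polynomial.coeff · 0) h0
  have heval : ∀ z, p.eval z = (z • A + B).det := fun z => by
    rw [← Polynomial.coe_evalRingHom z, RingHom.map_det]
    congr 1
    ext i j
    simp [mul_comm (A i j)]
  exact (Polynomial.finite_setOfPred_isRoot hp).subset fun z hz => (heval z).trans hz

lemma finite_preimage_lineMap_det_add_eq_zero {R : Type*} [CommRing R] [IsDomain R]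
    {S X : Matrix n n R} (hX : (X + S).det ≠ 0) (Y : Matrix n n R) :
    ((lineMap X Y : R →ᵃ[R] Matrix n n R) ⁻¹' {W | (W + S).det = 0}).Finite := by
  simpa only [preimage_ofPred_eq, lineMap_apply_module', add_assoc] using
    finite_setOf_det_smul_add_eq_zero (Y - X) hX

lemma nonempty_accretiveMatrices_diff_det_add_eq_zero {𝕜 : Type*} [RCLike 𝕜]
    (S : Matrix n n 𝕜) : (accretiveMatrices n 𝕜 \ {X | (X + S).det = 0}).Nonempty := by
  obtain ⟨r, hr, hrS⟩ := (Ioi_infinite (0 : ℝ)).exists_notMem_finite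
    ((finite_spectrum (-S)).preimage (RCLike.ofReal_injective (K := 𝕜)).injOn)
  refine ⟨r • 1, ?_, fun hdet => hrS ?_⟩
  · rw [accretiveMatrices, mem_ofPred_eq, conjTranspose_smul, conjTranspose_one, star_trivial,
      ← smul_add]
    exact (PosDef.one.add PosDef.one).smul hr
  · rw [mem_preimage, spectrum.mem_iff, isUnit_iff_isUnit_det, sub_neg_eq_add,
      Algebra.algebraMap_eq_smul_one, isUnit_iff_ne_zero, not_not,
      ← RCLike.real_smul_eq_coe_smul]
    exact hdet

end Pencil

theorem zeta_isConnected_general {n : Type*} [Fintype n] [DecidableEq n] (S : Matrix n n ℂ) :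
    IsConnected {X : Matrix n n ℂ | (X + Xᴴ).PosDef ∧ (X + S).det ≠ 0} := by
  have hdiff : {X : Matrix n n ℂ | (X + Xᴴ).PosDef ∧ (X + S).det ≠ 0} =
      accretiveMatrices n ℂ \ {X | (X + S).det = 0} := rfl
  rw [hdiff]
  obtain ⟨X₀, hX₀⟩ := nonempty_accretiveMatrices_diff_det_add_eq_zero S
  refine IsPathConnected.isConnected ⟨X₀, hX₀, fun {X} hX => ?_⟩
  have hfinite := finite_preimage_lineMap_det_add_eq_zero hX₀.2 X
  exact joinedIn_diff_of_countable_preimage_lineMap (U := accretiveMatrices n ℂ)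
    convex_accretiveMatrices isOpen_accretiveMatrices hX₀ hX hfinite.countable

/-- The set `ζ_s⁺ = {X : X + X† > 0, det(X + s) ≠ 0}` is connected. -/
theorem zeta_isConnected (p q : ℕ) (hp : 1 ≤ p) (hq : 1 ≤ q) :
    IsConnected {X : Matrix (Fin (p + q)) (Fin (p + q)) ℂ |
      (X + Xᴴ).PosDef ∧ (X + sMat p q).det ≠ 0} :=
  zeta_isConnected_general (sMat p q)
end

section
/- The set H_{p,q} = {h an n×n complex matrix : s − h†sh is positive definite} is a connected subset of the space of n×n complex matrices. -/
open Matrix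
open scoped ComplexOrder

/-!
Split the space into positive and negative parts of the Hermitian form `S` and let `E t` scale the
positive part by `t`. Since `E t` does not increase the form for `t ∈ [0, 1]`, the path
`E t * h * E t` stays among the strict contractions and joins `h` to its compression to the negative
part, where being a strict contraction means expanding a positive definite form. Scaling by a large
enough factor, continuous in the matrix, turns invertible matrices into expanding ones, so that
connectedness of `GL n ℂ` finishes the argument. The latter holds because a complex line through two
invertible matrices contains only finitely many singular ones.
-/

section Invertible

variable {n : Type*} [Fintype n] [DecidableEq n]

lemma finite_setOf_not_isUnit_add_smul {K : Type*} [Field K] {A : Matrix n n K} (hA : IsUnit A)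
    (B : Matrix n n K) : {z : K | ¬IsUnit (A + z • B)}.Finite := by
  let P : Polynomial K :=
    ((Polynomial.X : Polynomial K) • B.map Polynomial.C + A.map Polynomial.C).det
  have eval_P (z : K) : P.eval z = (A + z • B).det := by
    rw [← Polynomial.coe_evalRingHom, RingHom.map_det]
    congr 1
    ext i j
    simp [add_comm, mul_comm z]
  have P_ne_zero : P ≠ 0 := by
    intro hP
    have : A.det = 0 := by simpa [hP] using (eval_P 0).symm
    exact ((isUnit_iff_isUnit_det A).mp hA).ne_zero this
  refine (Polynomial.finite_setOfPred_isRoot P_ne_zero).subset fun z hz ↦ ?_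
  simpa [isUnit_iff_isUnit_det, ← eval_P] using hz

lemma isPathConnected_setOf_isUnit_matrix : IsPathConnected {A : Matrix n n ℂ | IsUnit A} := by
  refine ⟨1, isUnit_one, fun {A} hA ↦ ?_⟩
  let line : ℂ → Matrix n n ℂ := fun z ↦ 1 + z • (A - 1)
  have hfinite : {z : ℂ | ¬IsUnit (line z)}.Finite :=
    finite_setOf_not_isUnit_add_smul isUnit_one (A - 1)
  have hline : IsPathConnected {z : ℂ | ¬IsUnit (line z)}ᶜ :=
    hfinite.countable.isPathConnected_compl_of_one_lt_rank
      (by rw [Complex.rank_real_complex]; exact Nat.one_lt_ofNat)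
  have joined : JoinedIn {z : ℂ | ¬IsUnit (line z)}ᶜ 0 1 :=
    hline.joinedIn 0 (by simp [line]) 1 (by simpa [line] using hA)
  have line_continuous : Continuous line := by fun_prop
  simpa [line] using (joined.map line_continuous).mono (by rintro _ ⟨z, hz, rfl⟩; simpa using hz)

end Invertible

section Form

variable {𝕜 m n : Type*} [RCLike 𝕜] [Fintype m] [Fintype n]

/-- The value `v† S v` at `v` of the sesquilinear form with Gram matrix `S`. -/
def quadForm (S : Matrix n n 𝕜) (v : n → 𝕜) : 𝕜 :=
  star v ⬝ᵥ (S *ᵥ v)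

/-- The matrices that strictly decrease the Hermitian form `S`; for `S = sMat p q` this is
`H_{p,q}`, and for `S = -1` it consists of the matrices that expand the Euclidean norm. -/
def strictContractions (S : Matrix n n 𝕜) : Set (Matrix n n 𝕜) :=
  {h | (S - hᴴ * S * h).PosDef}

lemma quadForm_zero (S : Matrix n n 𝕜) : quadForm S 0 = 0 := by
  simp [quadForm]

lemma quadForm_neg (S : Matrix n n 𝕜) (v : n → 𝕜) : quadForm (-S) v = -quadForm S v := by
  simp [quadForm, neg_mulVec]

lemma quadForm_smul (S : Matrix n n 𝕜) (t : ℝ) (v : n → 𝕜) :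
    quadForm S (t • v) = (t : 𝕜) ^ 2 * quadForm S v := by
  simp [quadForm, mulVec_smul, RCLike.real_smul_eq_coe_mul, sq, mul_assoc]

lemma quadForm_conjTranspose_mul_mul (S : Matrix m m 𝕜) (g : Matrix m n 𝕜) (v : n → 𝕜) :
    quadForm (gᴴ * S * g) v = quadForm S (g *ᵥ v) := by
  simp [quadForm, star_mulVec, dotProduct_mulVec, vecMul_vecMul, Matrix.mul_assoc]

lemma quadForm_fromBlocks (A : Matrix m m 𝕜) (B : Matrix n n 𝕜) (v : m ⊕ n → 𝕜) :
    quadForm (fromBlocks A 0 0 B) v =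
      quadForm A (v ∘ Sum.inl) + quadForm B (v ∘ Sum.inr) := by
  simp [quadForm, fromBlocks_mulVec, dotProduct, Fintype.sum_sum_type]

lemma mem_strictContractions_iff {S : Matrix n n 𝕜} (hS : S.IsHermitian) {h : Matrix n n 𝕜} :
    h ∈ strictContractions S ↔ ∀ v ≠ 0, quadForm S (h *ᵥ v) < quadForm S v := by
  have form_sub (v : n → 𝕜) : star v ⬝ᵥ ((S - hᴴ * S * h) *ᵥ v) =
      quadForm S v - quadForm S (h *ᵥ v) := by
    rw [← quadForm_conjTranspose_mul_mul, sub_mulVec, dotProduct_sub, quadForm, quadForm]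
  simp only [strictContractions, Set.mem_ofPred_eq, posDef_iff_dotProduct_mulVec, form_sub, sub_pos,
    hS.sub (isHermitian_conjTranspose_mul_mul h hS), true_and]

lemma mul_mul_mem_strictContractions {S E h : Matrix n n 𝕜} (hS : S.IsHermitian)
    (hE : ∀ v, quadForm S (E *ᵥ v) ≤ quadForm S v)
    (hker : ∀ v ≠ 0, E *ᵥ v = 0 → 0 < quadForm S v) (hh : h ∈ strictContractions S) :
    E * h * E ∈ strictContractions S := by
  rw [mem_strictContractions_iff hS] at hh ⊢
  intro v hv
  simp only [← mulVec_mulVec]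
  by_cases hEv : E *ᵥ v = 0
  · simpa [hEv, quadForm_zero] using hker v hv hEv
  · calc quadForm S (E *ᵥ h *ᵥ E *ᵥ v) ≤ quadForm S (h *ᵥ E *ᵥ v) := hE _
      _ < quadForm S (E *ᵥ v) := hh _ hEv
      _ ≤ quadForm S v := hE v

end Form

section Congruence

variable {𝕜 n : Type*} [RCLike 𝕜] [Fintype n] [DecidableEq n] {S g : Matrix n n 𝕜}

lemma conjugate_mem_strictContractions_iff (hg : IsUnit g) {h : Matrix n n 𝕜} :
    g⁻¹ * h * g ∈ strictContractions (gᴴ * S * g) ↔ h ∈ strictContractions S := by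
  obtain ⟨_⟩ := hg.nonempty_invertible
  have congruence : gᴴ * S * g - (g⁻¹ * h * g)ᴴ * (gᴴ * S * g) * (g⁻¹ * h * g) =
      star g * (S - hᴴ * S * h) * g := by
    simp [star_eq_conjTranspose, conjTranspose_nonsing_inv, Matrix.mul_sub, Matrix.sub_mul,
      Matrix.mul_assoc]
  simp only [strictContractions, Set.mem_ofPred_eq, congruence]
  exact Matrix.IsUnit.posDef_star_left_conjugate_iff hg

lemma isPathConnected_strictContractions_congruence (hg : IsUnit g)
    (hS : IsPathConnected (strictContractions S)) :
    IsPathConnected (strictContractions (gᴴ * S * g)) := by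
  obtain ⟨_⟩ := hg.nonempty_invertible
  have image_conjugate : (fun h ↦ g⁻¹ * h * g) '' strictContractions S =
      strictContractions (gᴴ * S * g) := by
    ext k
    refine ⟨?_, fun hk ↦ ⟨g * k * g⁻¹, ?_, ?_⟩⟩
    · rintro ⟨h, hh, rfl⟩
      exact (conjugate_mem_strictContractions_iff hg).mpr hh
    · rw [← conjugate_mem_strictContractions_iff hg]
      simpa [Matrix.mul_assoc] using hk
    · simp [Matrix.mul_assoc]
  rw [← image_conjugate]
  exact hS.image (by fun_prop)

end Congruence

section Reindex

variable {𝕜 m n : Type*} [RCLike 𝕜] [Fintype m] [Fintype n] {S : Matrix n n 𝕜} (e : m ≃ n)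

lemma submatrix_mem_strictContractions_iff {h : Matrix n n 𝕜} :
    h.submatrix e e ∈ strictContractions (S.submatrix e e) ↔ h ∈ strictContractions S := by
  have sub_submatrix : S.submatrix e e - (h.submatrix e e)ᴴ * S.submatrix e e * h.submatrix e e =
      (S - hᴴ * S * h).submatrix e e := by
    simp [conjTranspose_submatrix, submatrix_sub]
  simp only [strictContractions, Set.mem_ofPred_eq, sub_submatrix]
  exact ⟨fun hS ↦ by simpa using hS.submatrix e.symm.injective, fun hS ↦ hS.submatrix e.injective⟩

lemma isPathConnected_strictContractions_submatrix (hS : IsPathConnected (strictContractions S)) :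
    IsPathConnected (strictContractions (S.submatrix e e)) := by
  have image_submatrix : (fun h : Matrix n n 𝕜 ↦ h.submatrix e e) '' strictContractions S =
      strictContractions (S.submatrix e e) := by
    ext k
    refine ⟨?_, fun hk ↦ ⟨k.submatrix e.symm e.symm, ?_, by simp⟩⟩
    · rintro ⟨h, hh, rfl⟩
      exact (submatrix_mem_strictContractions_iff e).mpr hh
    · rw [← submatrix_mem_strictContractions_iff e]
      simpa using hk
  rw [← image_submatrix]
  exact hS.image (continuous_id.matrix_submatrix e e)

end Reindex

section Definite

open scoped Matrix.Norms.L2Operator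

variable {𝕜 n : Type*} [RCLike 𝕜] [Fintype n] [DecidableEq n]

lemma mem_strictContractions_neg_one_iff {A : Matrix n n 𝕜} :
    A ∈ strictContractions (-1) ↔
      ∀ v ≠ 0, ‖WithLp.toLp 2 v‖ < ‖WithLp.toLp 2 (A *ᵥ v)‖ := by
  have quadForm_one (v : n → 𝕜) : quadForm 1 v = ((‖WithLp.toLp 2 v‖ ^ 2 : ℝ) : 𝕜) := by
    simp [quadForm, EuclideanSpace.norm_sq_eq, dotProduct, RCLike.conj_mul]
  rw [mem_strictContractions_iff isHermitian_one.neg]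
  simp only [quadForm_neg, neg_lt_neg_iff, quadForm_one, RCLike.ofReal_lt_ofReal]
  simp only [sq_lt_sq₀ (norm_nonneg _) (norm_nonneg _)]

lemma smul_mem_strictContractions_neg_one {A : Matrix n n 𝕜} (hA : A ∈ strictContractions (-1))
    {r : ℝ} (hr : 1 ≤ r) : r • A ∈ strictContractions (-1) := by
  rw [mem_strictContractions_neg_one_iff] at hA ⊢
  intro v hv
  calc ‖WithLp.toLp 2 v‖ < ‖WithLp.toLp 2 (A *ᵥ v)‖ := hA v hv
    _ ≤ r * ‖WithLp.toLp 2 (A *ᵥ v)‖ := le_mul_of_one_le_left (norm_nonneg _) hr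
    _ = ‖WithLp.toLp 2 ((r • A) *ᵥ v)‖ := by
      rw [smul_mulVec, WithLp.toLp_smul, norm_smul, Real.norm_of_nonneg (by positivity)]

lemma isUnit_of_mem_strictContractions_neg_one {A : Matrix n n 𝕜}
    (hA : A ∈ strictContractions (-1)) : IsUnit A := by
  rw [mem_strictContractions_neg_one_iff] at hA
  rw [isUnit_iff_isUnit_det, isUnit_iff_ne_zero]
  intro hdet
  obtain ⟨v, hv, hAv⟩ := exists_mulVec_eq_zero_iff.mpr hdet
  simpa [hAv, (norm_nonneg _).not_gt] using hA v hv

/-- A multiple of `A` that, for invertible `A`, expands the Euclidean norm: the factor comes from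
`‖v‖ ≤ ‖A⁻¹‖ * ‖A v‖`, with `1 +` making the inequality strict. -/
noncomputable def expandingMultiple (A : Matrix n n 𝕜) : Matrix n n 𝕜 :=
  (1 + ‖A⁻¹‖) • A

lemma expandingMultiple_mem_strictContractions {A : Matrix n n 𝕜} (hA : IsUnit A) :
    expandingMultiple A ∈ strictContractions (-1) := by
  obtain ⟨_⟩ := hA.nonempty_invertible
  rw [mem_strictContractions_neg_one_iff]
  intro v hv
  have hAv : 0 < ‖WithLp.toLp 2 (A *ᵥ v)‖ := by
    rw [norm_pos_iff, Ne, WithLp.toLp_eq_zero, ← mulVec_zero A]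
    exact (mulVec_injective_of_isUnit hA).ne hv
  calc ‖WithLp.toLp 2 v‖ = ‖WithLp.toLp 2 (A⁻¹ *ᵥ A *ᵥ v)‖ := by simp
    _ ≤ ‖A⁻¹‖ * ‖WithLp.toLp 2 (A *ᵥ v)‖ := l2_opNorm_mulVec A⁻¹ (WithLp.toLp 2 (A *ᵥ v))
    _ < (1 + ‖A⁻¹‖) * ‖WithLp.toLp 2 (A *ᵥ v)‖ := by linarith
    _ = ‖WithLp.toLp 2 (expandingMultiple A *ᵥ v)‖ := by
      rw [expandingMultiple, smul_mulVec, WithLp.toLp_smul, norm_smul,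
        Real.norm_of_nonneg (by positivity)]

lemma continuousOn_expandingMultiple :
    ContinuousOn (expandingMultiple (𝕜 := 𝕜) (n := n)) {A | IsUnit A} := by
  have continuousOn_inv : ContinuousOn (fun A : Matrix n n 𝕜 ↦ A⁻¹) {A | IsUnit A} := by
    simp only [nonsing_inv_eq_ringInverse]
    rintro _ ⟨A, rfl⟩
    exact (NormedRing.inverse_continuousAt A).continuousWithinAt
  unfold expandingMultiple
  fun_prop

lemma joinedIn_expandingMultiple {A : Matrix n n 𝕜} (hA : A ∈ strictContractions (-1)) :
    JoinedIn (strictContractions (-1)) A (expandingMultiple A) := by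
  refine JoinedIn.ofLine (f := fun t : ℝ ↦ (1 + t * ‖A⁻¹‖) • A) (by fun_prop) (by simp)
    (by simp [expandingMultiple]) ?_
  rintro _ ⟨t, ht, rfl⟩
  exact smul_mem_strictContractions_neg_one hA
    (le_add_of_nonneg_right (mul_nonneg ht.1 (norm_nonneg _)))

lemma isPathConnected_strictContractions_neg_one :
    IsPathConnected (strictContractions (-1 : Matrix n n ℂ)) := by
  obtain ⟨A₀, hA₀, joined⟩ := (isPathConnected_setOf_isUnit_matrix (n := n)).image'
    continuousOn_expandingMultiple
  have image_subset : expandingMultiple '' {A : Matrix n n ℂ | IsUnit A} ⊆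
      strictContractions (-1) := by
    rintro _ ⟨A, hA, rfl⟩
    exact expandingMultiple_mem_strictContractions hA
  refine ⟨A₀, image_subset hA₀, fun {A} hA ↦ ?_⟩
  have hA_unit := isUnit_of_mem_strictContractions_neg_one hA
  exact ((joined (Set.mem_image_of_mem _ hA_unit)).mono image_subset).trans
    (joinedIn_expandingMultiple hA).symm

end Definite

open scoped Matrix.Norms.L2Operator MatrixOrder in
lemma isPathConnected_strictContractions_neg {n : Type*} [Fintype n] {B : Matrix n n ℂ}
    (hB : B.PosDef) :
    IsPathConnected (strictContractions (-B)) := by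
  classical
  obtain ⟨g, hg, rfl⟩ := CStarAlgebra.isStrictlyPositive_iff_eq_star_mul_self.mp
    hB.isStrictlyPositive
  simpa [star_eq_conjTranspose] using
    isPathConnected_strictContractions_congruence hg isPathConnected_strictContractions_neg_one

section ScaleFirst

variable {𝕜 m n : Type*} [RCLike 𝕜] [DecidableEq m] [DecidableEq n]

/-- The block matrix scaling the first summand by `t` and fixing the second; letting `t` go from `1`
to `0` deforms a matrix `h` to its compression to the second summand. -/
def scaleFirst (𝕜 m n : Type*) [RCLike 𝕜] [DecidableEq m] [DecidableEq n] (t : ℝ) :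
    Matrix (m ⊕ n) (m ⊕ n) 𝕜 :=
  fromBlocks (t • 1) 0 0 1

lemma continuous_scaleFirst : Continuous (scaleFirst 𝕜 m n) := by
  unfold scaleFirst
  fun_prop

lemma scaleFirst_one : scaleFirst 𝕜 m n 1 = 1 := by
  simp [scaleFirst]

variable [Fintype m] [Fintype n]

lemma scaleFirst_mulVec (t : ℝ) (v : m ⊕ n → 𝕜) :
    scaleFirst 𝕜 m n t *ᵥ v = Sum.elim (t • (v ∘ Sum.inl)) (v ∘ Sum.inr) := by
  simp [scaleFirst, fromBlocks_mulVec, smul_mulVec]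

lemma scaleFirst_zero_mul_mul (h : Matrix (m ⊕ n) (m ⊕ n) 𝕜) :
    scaleFirst 𝕜 m n 0 * h * scaleFirst 𝕜 m n 0 = fromBlocks 0 0 0 h.toBlocks₂₂ := by
  rw [← fromBlocks_toBlocks h]
  simp [scaleFirst, fromBlocks_multiply]

end ScaleFirst

section Blocks

variable {𝕜 m n : Type*} [RCLike 𝕜] [Fintype m] [Fintype n]
  {A : Matrix m m 𝕜} {B : Matrix n n 𝕜}

lemma quadForm_nonneg (hA : A.PosSemidef) (v : m → 𝕜) : 0 ≤ quadForm A v :=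
  hA.dotProduct_mulVec_nonneg v

lemma quadForm_fromBlocks_zero_pos (hA : A.PosDef) {v : m ⊕ n → 𝕜} (hv : v ≠ 0)
    (hinr : v ∘ Sum.inr = 0) : 0 < quadForm (fromBlocks A 0 0 B) v := by
  have hinl : v ∘ Sum.inl ≠ 0 := fun hinl ↦
    hv (by rw [← Sum.elim_comp_inl_inr v, hinl, hinr, Sum.elim_zero_zero])
  rw [quadForm_fromBlocks, hinr, quadForm_zero, add_zero]
  exact hA.dotProduct_mulVec_pos hinl

lemma toBlocks₂₂_mem_strictContractions (hA : A.PosSemidef) (hB : B.IsHermitian)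
    {h : Matrix (m ⊕ n) (m ⊕ n) 𝕜} (hh : h ∈ strictContractions (fromBlocks A 0 0 B)) :
    h.toBlocks₂₂ ∈ strictContractions B := by
  rw [mem_strictContractions_iff (hA.isHermitian.fromBlocks (by simp) hB)] at hh
  rw [mem_strictContractions_iff hB]
  intro v hv
  let w : m ⊕ n → 𝕜 := Sum.elim 0 v
  have hw : w ≠ 0 := fun hw ↦ hv (congrArg (· ∘ Sum.inr) hw)
  calc quadForm B (h.toBlocks₂₂ *ᵥ v)
      ≤ quadForm A (h.toBlocks₁₂ *ᵥ v) + quadForm B (h.toBlocks₂₂ *ᵥ v) :=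
        le_add_of_nonneg_left (quadForm_nonneg hA _)
    _ = quadForm (fromBlocks A 0 0 B) (h *ᵥ w) := by
        nth_rw 3 [← fromBlocks_toBlocks h]
        simp [w, quadForm_fromBlocks, fromBlocks_mulVec]
    _ < quadForm (fromBlocks A 0 0 B) w := hh w hw
    _ = quadForm B v := by simp [w, quadForm_fromBlocks, quadForm_zero]

lemma fromBlocks_zero_mem_strictContractions (hA : A.PosDef) (hB : B.IsHermitian)
    {D : Matrix n n 𝕜} (hD : D ∈ strictContractions B) :
    fromBlocks 0 0 0 D ∈ strictContractions (fromBlocks A 0 0 B) := by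
  rw [mem_strictContractions_iff hB] at hD
  rw [mem_strictContractions_iff (hA.isHermitian.fromBlocks (by simp) hB)]
  intro v hv
  have form_image : quadForm (fromBlocks A 0 0 B) (fromBlocks 0 0 0 D *ᵥ v) =
      quadForm B (D *ᵥ (v ∘ Sum.inr)) := by
    simp [quadForm_fromBlocks, fromBlocks_mulVec, quadForm_zero]
  rw [form_image]
  by_cases hinr : v ∘ Sum.inr = 0
  · simpa [hinr, quadForm_zero] using quadForm_fromBlocks_zero_pos hA hv hinr
  · rw [quadForm_fromBlocks]
    exact (hD _ hinr).trans_le (le_add_of_nonneg_left (quadForm_nonneg hA.posSemidef _))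

lemma scaleFirst_mul_mul_mem_strictContractions [DecidableEq m] [DecidableEq n] (hA : A.PosDef)
    (hB : B.IsHermitian) {h : Matrix (m ⊕ n) (m ⊕ n) 𝕜}
    (hh : h ∈ strictContractions (fromBlocks A 0 0 B)) {t : ℝ} (ht : t ∈ Set.Icc (0 : ℝ) 1) :
    scaleFirst 𝕜 m n t * h * scaleFirst 𝕜 m n t ∈ strictContractions (fromBlocks A 0 0 B) := by
  refine mul_mul_mem_strictContractions (hA.isHermitian.fromBlocks (by simp) hB) (fun v ↦ ?_)
    (fun v hv hker ↦ quadForm_fromBlocks_zero_pos hA hv ?_) hh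
  · have ht_sq : ((t : 𝕜) ^ 2) ≤ 1 := mod_cast pow_le_one₀ ht.1 ht.2
    simp only [quadForm_fromBlocks, scaleFirst_mulVec, Sum.elim_comp_inl, Sum.elim_comp_inr,
      quadForm_smul]
    gcongr
    exact mul_le_of_le_one_left (quadForm_nonneg hA.posSemidef _) ht_sq
  · simpa [scaleFirst_mulVec] using congrArg (· ∘ Sum.inr) hker

lemma isPathConnected_strictContractions_fromBlocks (hA : A.PosDef) (hB : B.IsHermitian)
    (hpath : IsPathConnected (strictContractions B)) :
    IsPathConnected (strictContractions (fromBlocks A 0 0 B)) := by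
  classical
  obtain ⟨D₀, hD₀, joined⟩ := hpath
  refine ⟨fromBlocks 0 0 0 D₀, fromBlocks_zero_mem_strictContractions hA hB hD₀, fun {h} hh ↦ ?_⟩
  have to_block : JoinedIn (strictContractions (fromBlocks A 0 0 B))
      (fromBlocks 0 0 0 h.toBlocks₂₂) h := by
    refine JoinedIn.ofLine (f := fun t ↦ scaleFirst 𝕜 m n t * h * scaleFirst 𝕜 m n t) ?_
      (scaleFirst_zero_mul_mul h) (by simp [scaleFirst_one]) ?_
    · exact ((continuous_scaleFirst.mul_const h).mul continuous_scaleFirst).continuousOn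
    · rintro _ ⟨t, ht, rfl⟩
      exact scaleFirst_mul_mul_mem_strictContractions hA hB hh ht
  have between_blocks : JoinedIn (strictContractions (fromBlocks A 0 0 B))
      (fromBlocks 0 0 0 D₀) (fromBlocks 0 0 0 h.toBlocks₂₂) := by
    have continuous_block :
        Continuous fun D : Matrix n n 𝕜 ↦ (fromBlocks 0 0 0 D : Matrix (m ⊕ n) (m ⊕ n) 𝕜) := by
      fun_prop
    have joined_block := joined (toBlocks₂₂_mem_strictContractions hA.posSemidef hB hh)
    refine (joined_block.map continuous_block).mono ?_
    rintro _ ⟨D, hD, rfl⟩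
    exact fromBlocks_zero_mem_strictContractions hA hB hD
  exact between_blocks.trans to_block

end Blocks

section Hermitian

variable {n : Type*} [Fintype n] [DecidableEq n]

lemma isPathConnected_strictContractions_diagonal {d : n → ℝ} (hd : ∀ i, d i ≠ 0) :
    IsPathConnected (strictContractions (diagonal (fun i ↦ (d i : ℂ)))) := by
  let e : n ≃ {i // 0 < d i} ⊕ {i // ¬0 < d i} := (Equiv.sumCompl fun i ↦ 0 < d i).symm
  let A : Matrix {i // 0 < d i} {i // 0 < d i} ℂ := diagonal fun i ↦ (d i : ℂ)
  let B : Matrix {i // ¬0 < d i} {i // ¬0 < d i} ℂ := diagonal fun i ↦ -(d i : ℂ)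
  have hA : A.PosDef := posDef_diagonal_iff.mpr fun i ↦ mod_cast i.2
  have hB : B.PosDef := posDef_diagonal_iff.mpr fun i ↦ by
    have : d i < 0 := (not_lt.mp i.2).lt_of_ne (hd i)
    exact_mod_cast neg_pos.mpr this
  have diagonal_eq : diagonal (fun i ↦ (d i : ℂ)) = (fromBlocks A 0 0 (-B)).submatrix e e := by
    simp only [A, B, diagonal_neg, neg_neg, fromBlocks_diagonal, submatrix_diagonal_equiv]
    congr 1
    ext i
    obtain ⟨j, rfl⟩ := e.symm.surjective i
    rcases j with j | j <;> simp [e]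
  rw [diagonal_eq]
  exact isPathConnected_strictContractions_submatrix e
    (isPathConnected_strictContractions_fromBlocks hA hB.isHermitian.neg
      (isPathConnected_strictContractions_neg hB))

lemma eigenvalues_ne_zero_of_isUnit {𝕜 : Type*} [RCLike 𝕜] {S : Matrix n n 𝕜}
    (hS : S.IsHermitian) (hS_unit : IsUnit S) (i : n) : hS.eigenvalues i ≠ 0 := by
  have hprod : ∏ j, (hS.eigenvalues j : 𝕜) ≠ 0 := by
    rw [← hS.det_eq_prod_eigenvalues]
    exact ((isUnit_iff_isUnit_det S).mp hS_unit).ne_zero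
  exact mod_cast Finset.prod_ne_zero_iff.mp hprod i (Finset.mem_univ i)

theorem Hpq_isConnected_general {S : Matrix n n ℂ} (hS : S.IsHermitian) (hS_unit : IsUnit S) :
    IsPathConnected {h : Matrix n n ℂ | (S - hᴴ * S * h).PosDef} := by
  let U : Matrix n n ℂ := hS.eigenvectorUnitary
  have S_eq : S = (star U)ᴴ * diagonal (fun i ↦ (hS.eigenvalues i : ℂ)) * star U := by
    simpa [U, star_eq_conjTranspose] using! hS.spectral_theorem
  have U_unit : IsUnit (star U) := (Unitary.isUnit_coe (U := hS.eigenvectorUnitary)).star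
  change IsPathConnected (strictContractions S)
  rw [S_eq]
  exact isPathConnected_strictContractions_congruence U_unit
    (isPathConnected_strictContractions_diagonal (eigenvalues_ne_zero_of_isUnit hS hS_unit))

end Hermitian

lemma isUnit_sMat (p q : ℕ) : IsUnit (sMat p q) :=
  isUnit_diagonal.mpr <| Pi.isUnit_iff.mpr fun i ↦ by split_ifs <;> simp

/-- **Corollary 5.4 (first part)**: the semigroup
`H_{p,q} = {h : s − h†sh > 0}` is connected. -/
theorem Hpq_isConnected (p q : ℕ) (hp : 1 ≤ p) (hq : 1 ≤ q) :
    IsConnected {h : Matrix (Fin (p + q)) (Fin (p + q)) ℂ |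
      (sMat p q - hᴴ * sMat p q * h).PosDef} :=
  (Hpq_isConnected_general (isHermitian_sMat p q) (isUnit_sMat p q)).isConnected
end

section
/- Let h be an invertible n×n complex matrix with s − h†sh positive definite, and set m = h s h† s. Then m is diagonalizable by a pseudo-unitary transformation with positive real eigenvalues different from 1: there exist an n×n complex matrix g with g† s g = s and real numbers d_1, …, d_n with d_k > 0 and d_k ≠ 1 for all k, such that g^{-1} m g is the diagonal matrix with entries d_1, …, d_n. -/
open Matrix
open scoped ComplexOrder

/-!
A pencil of a positive definite form `P` and the indefinite form `S` has a simultaneous eigenbasis.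
Since Sylvester's law of inertia matches the signs of its eigenvalues with those of `S`, that basis
can be permuted and rescaled to be pseudo-unitary. For `P = S − h†Sh` this gives a pseudo-unitary
`k` with `k†Pk = T > 0` and `(hk)†S(hk) = S − T` diagonal. The latter form has the inertia of `S`,
so subtracting `T` flips no sign: `S − T = S Σ²` with `Σ > 0` and `Σ ≠ 1` entrywise. Hence
`hk = gΣ` with `g` pseudo-unitary, an indefinite singular value decomposition, and `h S⁻¹ h† S`
acts on the columns of `g` as `Σ²`.
-/

section RealDiagonal

variable {n : Type*} [DecidableEq n] {𝕜 : Type*} [RCLike 𝕜]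

/-- The diagonal matrix over `𝕜` with real diagonal entries `a`: the Gram matrix of the Hermitian
form `v ↦ ∑ i, a i * ‖v i‖ ^ 2`, nondegenerate when no entry vanishes. -/
def realDiagonal (𝕜 : Type*) [RCLike 𝕜] (a : n → ℝ) : Matrix n n 𝕜 :=
  diagonal fun i => (a i : 𝕜)

lemma realDiagonal_one : realDiagonal 𝕜 (1 : n → ℝ) = 1 := by
  simp [realDiagonal]

lemma realDiagonal_sub (a b : n → ℝ) :
    realDiagonal 𝕜 (a - b) = realDiagonal 𝕜 a - realDiagonal 𝕜 b := by
  simp [realDiagonal, diagonal_sub]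

lemma conjTranspose_realDiagonal (a : n → ℝ) : (realDiagonal 𝕜 a)ᴴ = realDiagonal 𝕜 a := by
  simp [realDiagonal, diagonal_conjTranspose, Pi.star_def]

variable [Fintype n]

lemma realDiagonal_mul (a b : n → ℝ) :
    realDiagonal 𝕜 (a * b) = realDiagonal 𝕜 a * realDiagonal 𝕜 b := by
  simp [realDiagonal, diagonal_mul_diagonal]

lemma isUnit_realDiagonal_iff {a : n → ℝ} : IsUnit (realDiagonal 𝕜 a) ↔ ∀ i, a i ≠ 0 := by
  simp [realDiagonal, Pi.isUnit_iff]

lemma conjTranspose_mul_realDiagonal_congr {A M : Matrix n n 𝕜} {c : n → ℝ}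
    (hA : Aᴴ * M * A = realDiagonal 𝕜 c) (w : n → ℝ) :
    (A * realDiagonal 𝕜 w)ᴴ * M * (A * realDiagonal 𝕜 w) = realDiagonal 𝕜 (w ^ 2 * c) := by
  calc (A * realDiagonal 𝕜 w)ᴴ * M * (A * realDiagonal 𝕜 w)
      = realDiagonal 𝕜 w * (Aᴴ * M * A) * realDiagonal 𝕜 w := by
        simp only [conjTranspose_mul, conjTranspose_realDiagonal, Matrix.mul_assoc]
    _ = realDiagonal 𝕜 (w ^ 2 * c) := by
        rw [hA, ← realDiagonal_mul, ← realDiagonal_mul]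
        congr 1
        ring

lemma star_dotProduct_realDiagonal_mulVec (a : n → ℝ) (v : n → 𝕜) :
    star v ⬝ᵥ (realDiagonal 𝕜 a *ᵥ v) = ((∑ i, a i * ‖v i‖ ^ 2 : ℝ) : 𝕜) := by
  simp only [realDiagonal, dotProduct, mulVec_diagonal, Pi.star_apply, RCLike.star_def]
  push_cast
  refine Finset.sum_congr rfl fun i _ => ?_
  rw [← RCLike.conj_mul]
  ring

end RealDiagonal

section Inertia

variable {m n : Type*} [Fintype m] [DecidableEq m] [Fintype n] [DecidableEq n]
  {𝕜 : Type*} [RCLike 𝕜] {a : m → ℝ} {b : n → ℝ}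

lemma sum_mul_norm_mulVec_sq {A : Matrix m n 𝕜}
    (hA : Aᴴ * realDiagonal 𝕜 a * A = realDiagonal 𝕜 b) (v : n → 𝕜) :
    ∑ i, a i * ‖(A *ᵥ v) i‖ ^ 2 = ∑ j, b j * ‖v j‖ ^ 2 := by
  apply RCLike.ofReal_injective (K := 𝕜)
  rw [← star_dotProduct_realDiagonal_mulVec, ← star_dotProduct_realDiagonal_mulVec, ← hA,
    star_mulVec, ← dotProduct_mulVec, mulVec_mulVec, mulVec_mulVec, Matrix.mul_assoc]

lemma eq_zero_of_mulVec_eq_zero_of_pos {A : Matrix m n 𝕜}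
    (hA : Aᴴ * realDiagonal 𝕜 a * A = realDiagonal 𝕜 b) {v : n → 𝕜}
    (hv : ∀ j, ¬ 0 < b j → v j = 0) (hAv : ∀ i, 0 < a i → (A *ᵥ v) i = 0) : v = 0 := by
  have hb_nonneg : ∀ j ∈ Finset.univ, 0 ≤ b j * ‖v j‖ ^ 2 := by
    intro j _
    by_cases hj : 0 < b j
    · positivity
    · simp [hv j hj]
  have ha_nonpos : ∑ i, a i * ‖(A *ᵥ v) i‖ ^ 2 ≤ 0 := by
    refine Finset.sum_nonpos fun i _ => ?_
    by_cases hi : 0 < a i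
    · simp [hAv i hi]
    · exact mul_nonpos_of_nonpos_of_nonneg (not_lt.mp hi) (sq_nonneg _)
  have hsum : ∑ j, b j * ‖v j‖ ^ 2 = 0 :=
    le_antisymm (sum_mul_norm_mulVec_sq hA v ▸ ha_nonpos) (Finset.sum_nonneg hb_nonneg)
  funext j
  by_cases hj : 0 < b j
  · simpa [hj.ne'] using (Finset.sum_eq_zero_iff_of_nonneg hb_nonneg).mp hsum j (Finset.mem_univ j)
  · exact hv j hj

theorem card_pos_le_of_conjTranspose_mul_mul_eq {A : Matrix m n 𝕜}
    (hA : Aᴴ * realDiagonal 𝕜 a * A = realDiagonal 𝕜 b) :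
    Fintype.card {j // 0 < b j} ≤ Fintype.card {i // 0 < a i} := by
  let extend := Function.ExtendByZero.linearMap 𝕜 (Subtype.val : {j // 0 < b j} → n)
  let restrict := LinearMap.funLeft 𝕜 𝕜 (Subtype.val : {i // 0 < a i} → m)
  have hinj : Function.Injective (restrict ∘ₗ A.mulVecLin ∘ₗ extend) := by
    refine (injective_iff_map_eq_zero _).mpr fun v hv => ?_
    have hext : extend v = 0 := by
      refine eq_zero_of_mulVec_eq_zero_of_pos hA (fun j hj => ?_) fun i hi => congrFun hv ⟨i, hi⟩
      exact Function.extend_apply' _ _ _ fun ⟨k, hk⟩ => hj (hk ▸ k.2)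
    funext j
    exact (Subtype.val_injective.extend_apply v 0 j).symm.trans (congrFun hext j)
  simpa using LinearMap.finrank_le_finrank_of_injective hinj

theorem card_pos_eq_of_conjTranspose_mul_mul_eq {a b : n → ℝ} {A : Matrix n n 𝕜} (hu : IsUnit A)
    (hA : Aᴴ * realDiagonal 𝕜 a * A = realDiagonal 𝕜 b) :
    Fintype.card {i // 0 < b i} = Fintype.card {i // 0 < a i} := by
  refine le_antisymm (card_pos_le_of_conjTranspose_mul_mul_eq hA)
    (card_pos_le_of_conjTranspose_mul_mul_eq (A := A⁻¹) ?_)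
  have hright : A * A⁻¹ = 1 := mul_nonsing_inv A ((isUnit_iff_isUnit_det A).mp hu)
  calc A⁻¹ᴴ * realDiagonal 𝕜 b * A⁻¹
      = (A * A⁻¹)ᴴ * realDiagonal 𝕜 a * (A * A⁻¹) := by
        simp only [← hA, conjTranspose_mul, Matrix.mul_assoc]
    _ = realDiagonal 𝕜 a := by simp [hright]

end Inertia

section SimultaneousDiagonalization

variable {n : Type*} [Fintype n] [DecidableEq n] {𝕜 : Type*} [RCLike 𝕜]

lemma exists_conjTranspose_mul_mul_eq_eigenvalues {A : Matrix n n 𝕜} (hA : A.IsHermitian) :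
    ∃ U : Matrix n n 𝕜, Uᴴ * U = 1 ∧ Uᴴ * A * U = realDiagonal 𝕜 hA.eigenvalues := by
  refine ⟨hA.eigenvectorUnitary, Unitary.coe_star_mul_self _, ?_⟩
  have hdiag := hA.conjStarAlgAut_star_eigenvectorUnitary
  rwa [Unitary.conjStarAlgAut_star_apply] at hdiag

lemma exists_conjTranspose_mul_mul_eq_one {P : Matrix n n 𝕜} (hP : P.PosDef) :
    ∃ B : Matrix n n 𝕜, Bᴴ * P * B = 1 := by
  obtain ⟨U, -, hU⟩ := exists_conjTranspose_mul_mul_eq_eigenvalues hP.isHermitian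
  refine ⟨U * realDiagonal 𝕜 fun i => (√(hP.isHermitian.eigenvalues i))⁻¹, ?_⟩
  rw [conjTranspose_mul_realDiagonal_congr hU, ← realDiagonal_one]
  congr 1
  funext i
  have hpos := hP.eigenvalues_pos i
  simp [Real.sq_sqrt hpos.le, hpos.ne']

theorem exists_simultaneous_diagonalization {P S : Matrix n n 𝕜} (hP : P.PosDef)
    (hS : S.IsHermitian) :
    ∃ (C : Matrix n n 𝕜) (l : n → ℝ), Cᴴ * P * C = 1 ∧ Cᴴ * S * C = realDiagonal 𝕜 l := by
  obtain ⟨B, hB⟩ := exists_conjTranspose_mul_mul_eq_one hP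
  obtain ⟨U, hU, hUS⟩ :=
    exists_conjTranspose_mul_mul_eq_eigenvalues (isHermitian_conjTranspose_mul_mul B hS)
  have hassoc (M : Matrix n n 𝕜) : (B * U)ᴴ * M * (B * U) = Uᴴ * (Bᴴ * M * B) * U := by
    simp only [conjTranspose_mul, Matrix.mul_assoc]
  exact ⟨B * U, _, by rw [hassoc, hB, Matrix.mul_one, hU], by rw [hassoc, hUS]⟩

end SimultaneousDiagonalization

lemma exists_perm_iff_of_card_eq {α : Type*} [Fintype α] {r s : α → Prop} [DecidablePred r]
    [DecidablePred s] (hcard : Fintype.card {x // r x} = Fintype.card {x // s x}) :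
    ∃ σ : Equiv.Perm α, ∀ x, s (σ x) ↔ r x := by
  let e := Fintype.equivOfCardEq hcard
  exact ⟨e.extendSubtype, fun x =>
    ⟨not_imp_not.mp (e.extendSubtype_not_mem x), e.extendSubtype_mem x⟩⟩

lemma div_pos_of_pos_iff_pos {x y : ℝ} (hx : x ≠ 0) (hy : y ≠ 0) (hxy : 0 < y ↔ 0 < x) :
    0 < x / y := by
  rcases lt_or_gt_of_ne hx with hneg | hpos
  · exact div_pos_of_neg_of_neg hneg (hy.lt_of_le (not_lt.mp fun h => hneg.not_gt (hxy.mp h)))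
  · exact div_pos hpos (hxy.mpr hpos)

section PseudoUnitary

variable {n : Type*} [Fintype n]

/-- `g` is pseudo-unitary for the form with Gram matrix `S`: it preserves `(u, v) ↦ u† S v`. -/
def IsPseudoUnitary {R : Type*} [NonUnitalSemiring R] [StarRing R] (S g : Matrix n n R) : Prop :=
  gᴴ * S * g = S

variable [DecidableEq n]

lemma isUnit_of_conjTranspose_mul_mul_eq {R : Type*} [CommRing R] [StarRing R]
    {A M N : Matrix n n R} (hN : IsUnit N) (hA : Aᴴ * M * A = N) : IsUnit A := by
  rw [isUnit_iff_isUnit_det, ← hA, det_mul] at hN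
  exact (isUnit_iff_isUnit_det A).mpr (isUnit_of_mul_isUnit_right hN)

lemma IsPseudoUnitary.mul_inv_mul_conjTranspose {R : Type*} [CommRing R] [StarRing R]
    {S g : Matrix n n R} (hg : IsPseudoUnitary S g) (hS : IsUnit S) : g * S⁻¹ * gᴴ = S⁻¹ := by
  have hdet : IsUnit S.det := (isUnit_iff_isUnit_det S).mp hS
  have hleft : S⁻¹ * gᴴ * S * g = 1 := by
    rw [Matrix.mul_assoc S⁻¹, Matrix.mul_assoc S⁻¹, hg, nonsing_inv_mul S hdet]
  have hright : g * (S⁻¹ * gᴴ * S) = 1 := mul_eq_one_comm.mp hleft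
  calc g * S⁻¹ * gᴴ = g * (S⁻¹ * gᴴ * S) * S⁻¹ := by
        simp only [Matrix.mul_assoc, mul_nonsing_inv S hdet, Matrix.mul_one]
    _ = S⁻¹ := by rw [hright, Matrix.one_mul]

variable {𝕜 : Type*} [RCLike 𝕜] {a : n → ℝ}

theorem exists_isPseudoUnitary_diagonalizing_posDef (ha : ∀ i, a i ≠ 0) {P : Matrix n n 𝕜}
    (hP : P.PosDef) :
    ∃ k : Matrix n n 𝕜, IsPseudoUnitary (realDiagonal 𝕜 a) k ∧
      ∃ t : n → ℝ, (∀ i, 0 < t i) ∧ kᴴ * P * k = realDiagonal 𝕜 t := by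
  obtain ⟨C, l, hCP, hCS⟩ :=
    exists_simultaneous_diagonalization hP (conjTranspose_realDiagonal (𝕜 := 𝕜) a)
  have hC : IsUnit C := isUnit_of_conjTranspose_mul_mul_eq isUnit_one hCP
  have hl : ∀ i, l i ≠ 0 := isUnit_realDiagonal_iff.mp <|
    hCS ▸ (hC.star.mul (isUnit_realDiagonal_iff.mpr ha)).mul hC
  obtain ⟨σ, hσ⟩ := exists_perm_iff_of_card_eq (card_pos_eq_of_conjTranspose_mul_mul_eq hC hCS).symm
  have hratio (i : n) : 0 < a i / l (σ i) := div_pos_of_pos_iff_pos (ha i) (hl _) (hσ i)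
  have hsq (i : n) : √(a i / l (σ i)) ^ 2 = a i / l (σ i) := Real.sq_sqrt (hratio i).le
  let D := C.submatrix id σ
  have hDS : Dᴴ * realDiagonal 𝕜 a * D = realDiagonal 𝕜 (l ∘ σ) :=
    (congrArg (fun M => M.submatrix σ σ) hCS).trans (submatrix_diagonal_equiv _ σ)
  have hDP : Dᴴ * P * D = realDiagonal 𝕜 1 :=
    (congrArg (fun M => M.submatrix σ σ) hCP).trans
      ((submatrix_one_equiv σ).trans realDiagonal_one.symm)
  refine ⟨D * realDiagonal 𝕜 fun i => √(a i / l (σ i)), ?_, fun i => a i / l (σ i), hratio, ?_⟩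
  · refine (conjTranspose_mul_realDiagonal_congr hDS _).trans (congrArg _ (funext fun i => ?_))
    simp [hsq, hl]
  · refine (conjTranspose_mul_realDiagonal_congr hDP _).trans (congrArg _ (funext fun i => ?_))
    simp [hsq]

lemma pos_sub_iff_pos_of_conjTranspose_mul_mul_eq {t : n → ℝ} (ht : ∀ i, 0 ≤ t i)
    {A : Matrix n n 𝕜} (hA : IsUnit A)
    (hAt : Aᴴ * realDiagonal 𝕜 a * A = realDiagonal 𝕜 (a - t)) (i : n) :
    0 < (a - t) i ↔ 0 < a i := by
  have hsub : (Finset.univ.filter fun i => 0 < (a - t) i) ⊆ Finset.univ.filter fun i => 0 < a i :=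
    Finset.monotone_filter_right _ fun i _ hi => (ht i).trans_lt (sub_pos.mp hi)
  have hcard := card_pos_eq_of_conjTranspose_mul_mul_eq hA hAt
  rw [Fintype.card_subtype, Fintype.card_subtype] at hcard
  simpa using Finset.ext_iff.mp (Finset.eq_of_subset_of_card_le hsub hcard.ge) i

theorem exists_hyperbolic_singular_value_decomposition (ha : ∀ i, a i ≠ 0) {h : Matrix n n 𝕜}
    (hinv : IsUnit h) (hh : (realDiagonal 𝕜 a - hᴴ * realDiagonal 𝕜 a * h).PosDef) :
    ∃ g k : Matrix n n 𝕜, IsPseudoUnitary (realDiagonal 𝕜 a) g ∧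
      IsPseudoUnitary (realDiagonal 𝕜 a) k ∧
      ∃ σ : n → ℝ, (∀ i, 0 < σ i ∧ σ i ≠ 1) ∧ h * k = g * realDiagonal 𝕜 σ := by
  obtain ⟨k, hk, t, ht, hkt⟩ := exists_isPseudoUnitary_diagonalizing_posDef ha hh
  have hkunit : IsUnit k :=
    isUnit_of_conjTranspose_mul_mul_eq (isUnit_realDiagonal_iff.mpr ha) hk
  have hhk : (h * k)ᴴ * realDiagonal 𝕜 a * (h * k) = realDiagonal 𝕜 (a - t) := by
    rw [realDiagonal_sub, ← hkt, Matrix.mul_sub, Matrix.sub_mul, hk]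
    simp only [conjTranspose_mul, Matrix.mul_assoc, sub_sub_cancel]
  have hunit : IsUnit (h * k) := hinv.mul hkunit
  have hsub : ∀ i, (a - t) i ≠ 0 := isUnit_realDiagonal_iff.mp <|
    hhk ▸ (hunit.star.mul (isUnit_realDiagonal_iff.mpr ha)).mul hunit
  have hratio (i : n) : 0 < (a - t) i / a i := div_pos_of_pos_iff_pos (hsub i) (ha i)
    (pos_sub_iff_pos_of_conjTranspose_mul_mul_eq (fun i => (ht i).le) hunit hhk i).symm
  let σ : n → ℝ := fun i => √((a - t) i / a i)
  have hσ (i : n) : 0 < σ i := Real.sqrt_pos.mpr (hratio i)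
  refine ⟨h * k * realDiagonal 𝕜 σ⁻¹, k, ?_, hk, σ, fun i => ⟨hσ i, fun hone => ?_⟩, ?_⟩
  · refine (conjTranspose_mul_realDiagonal_congr hhk _).trans (congrArg _ (funext fun i => ?_))
    have hsq : σ i ^ 2 = (a - t) i / a i := Real.sq_sqrt (hratio i).le
    rw [Pi.mul_apply, Pi.pow_apply, Pi.inv_apply, inv_pow, hsq, inv_div, div_mul_cancel₀ _ (hsub i)]
  · have hdiv : (a - t) i = a i := (div_eq_one_iff_eq (ha i)).mp (Real.sqrt_eq_one.mp hone)
    exact (ht i).ne' (sub_eq_self.mp hdiv)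
  · have hcancel : σ⁻¹ * σ = 1 := funext fun i => inv_mul_cancel₀ (hσ i).ne'
    rw [Matrix.mul_assoc, ← realDiagonal_mul, hcancel, realDiagonal_one, Matrix.mul_one]

lemma mul_mul_eq_mul_realDiagonal_sq (ha : ∀ i, a i ≠ 0) {g k h : Matrix n n 𝕜}
    (hg : IsPseudoUnitary (realDiagonal 𝕜 a) g) (hk : IsPseudoUnitary (realDiagonal 𝕜 a) k)
    {σ : n → ℝ} (hsvd : h * k = g * realDiagonal 𝕜 σ) :
    h * (realDiagonal 𝕜 a)⁻¹ * hᴴ * realDiagonal 𝕜 a * g = g * realDiagonal 𝕜 (σ ^ 2) := by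
  have hS : IsUnit (realDiagonal 𝕜 a) := isUnit_realDiagonal_iff.mpr ha
  have hcomm : realDiagonal 𝕜 σ * realDiagonal 𝕜 a = realDiagonal 𝕜 a * realDiagonal 𝕜 σ := by
    rw [← realDiagonal_mul, ← realDiagonal_mul, mul_comm]
  generalize realDiagonal 𝕜 a = S at *
  calc h * S⁻¹ * hᴴ * S * g
      = h * (k * S⁻¹ * kᴴ) * hᴴ * S * g := by rw [hk.mul_inv_mul_conjTranspose hS]
    _ = (h * k) * S⁻¹ * (h * k)ᴴ * S * g := by
        simp only [conjTranspose_mul, Matrix.mul_assoc]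
    _ = g * realDiagonal 𝕜 σ * S⁻¹ * realDiagonal 𝕜 σ * (gᴴ * S * g) := by
        simp only [hsvd, conjTranspose_mul, conjTranspose_realDiagonal, Matrix.mul_assoc]
    _ = g * realDiagonal 𝕜 σ * (S⁻¹ * S) * realDiagonal 𝕜 σ := by
        rw [hg, Matrix.mul_assoc _ (realDiagonal 𝕜 σ) S, hcomm]
        simp only [Matrix.mul_assoc]
    _ = g * realDiagonal 𝕜 (σ ^ 2) := by
        rw [nonsing_inv_mul S ((isUnit_iff_isUnit_det S).mp hS), Matrix.mul_one, pow_two,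
          realDiagonal_mul, Matrix.mul_assoc]

end PseudoUnitary

theorem M0_diagonalizable_pseudoUnitary_general {n : Type*} [Fintype n] [DecidableEq n]
    {𝕜 : Type*} [RCLike 𝕜] {a : n → ℝ} (ha : ∀ i, a i ≠ 0) {h : Matrix n n 𝕜} (hinv : IsUnit h)
    (hh : (realDiagonal 𝕜 a - hᴴ * realDiagonal 𝕜 a * h).PosDef) :
    ∃ g : Matrix n n 𝕜, gᴴ * realDiagonal 𝕜 a * g = realDiagonal 𝕜 a ∧
      ∃ d : n → ℝ, (∀ k, 0 < d k ∧ d k ≠ 1) ∧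
        g⁻¹ * (h * (realDiagonal 𝕜 a)⁻¹ * hᴴ * realDiagonal 𝕜 a) * g =
          diagonal fun k => (d k : 𝕜) := by
  obtain ⟨g, k, hg, hk, σ, hσ, hsvd⟩ := exists_hyperbolic_singular_value_decomposition ha hinv hh
  have hgunit : IsUnit g :=
    isUnit_of_conjTranspose_mul_mul_eq (isUnit_realDiagonal_iff.mpr ha) hg
  refine ⟨g, hg, σ ^ 2, fun i => ⟨pow_pos (hσ i).1 2, fun hone => (hσ i).2 ?_⟩, ?_⟩
  · exact (pow_eq_one_iff_of_nonneg (hσ i).1.le two_ne_zero).mp hone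
  · rw [Matrix.mul_assoc, mul_mul_eq_mul_realDiagonal_sq ha hg hk hsvd, ← Matrix.mul_assoc,
      nonsing_inv_mul g ((isUnit_iff_isUnit_det g).mp hgunit), Matrix.one_mul]
    rfl

lemma sMat_eq_realDiagonal (p q : ℕ) :
    sMat p q = realDiagonal ℂ fun i : Fin (p + q) => if (i : ℕ) < p then 1 else -1 := by
  simp only [sMat, realDiagonal, RCLike.ofReal_eq_complex_ofReal, apply_ite Complex.ofReal,
    Complex.ofReal_neg, Complex.ofReal_one]

lemma inv_sMat (p q : ℕ) : (sMat p q)⁻¹ = sMat p q := by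
  refine inv_eq_left_inv ?_
  rw [sMat, diagonal_mul_diagonal, ← diagonal_one]
  congr 1
  funext i
  split_ifs <;> norm_num

/-- **Lemma 4.13**: for invertible `h` with `s − h†sh > 0`, the matrix
`m = h s h† s` is diagonalized by a pseudo-unitary transformation, with positive
real eigenvalues different from `1`. -/
theorem M0_diagonalizable_pseudoUnitary (p q : ℕ) (hp : 1 ≤ p) (hq : 1 ≤ q)
    (h : Matrix (Fin (p + q)) (Fin (p + q)) ℂ) (hinv : IsUnit h)
    (hh : (sMat p q - hᴴ * sMat p q * h).PosDef) :
    ∃ g : Matrix (Fin (p + q)) (Fin (p + q)) ℂ, gᴴ * sMat p q * g = sMat p q ∧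
      ∃ d : Fin (p + q) → ℝ, (∀ k, 0 < d k ∧ d k ≠ 1) ∧
        g⁻¹ * (h * sMat p q * hᴴ * sMat p q) * g =
          Matrix.diagonal (fun k => (d k : ℂ)) := by
  rw [sMat_eq_realDiagonal] at hh
  simpa only [← sMat_eq_realDiagonal, inv_sMat, RCLike.ofReal_eq_complex_ofReal] using
    M0_diagonalizable_pseudoUnitary_general (fun i => by split_ifs <;> norm_num) hinv hh
end

section
/- Let n ≥ 1 and let ψ_1, …, ψ_n and φ_1, …, φ_n be real numbers with sin((ψ_j − φ_l)/2) ≠ 0 for all 1 ≤ j, l ≤ n. Let A be the n×n real matrix with entries A_{jl} = 1/sin((ψ_j − φ_l)/2). Then [∏_{1≤j<j'≤n} sin²((ψ_j − ψ_{j'})/2) · ∏_{1≤l<l'≤n} sin²((φ_l − φ_{l'})/2)] / [∏_{j=1}^{n} ∏_{l=1}^{n} sin²((ψ_j − φ_l)/2)] = (det A)². -/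
open Matrix

/-!
Since `sin (α - β) = sin α * cos β - cos α * sin β`, the matrix is the homogeneous Cauchy matrix
with entries `1 / [p i, q j]`, where `[p, q] = p₁ q₂ - p₂ q₁` and `p i`, `q j` are points of the
plane. Its determinant is computed by eliminating the first column: by the Plücker relation
`[p', q] [p, q'] - [p, q] [p', q'] = [p', p] [q, q']` the Schur complement of the corner entry is
again a Cauchy matrix, up to rescaling its rows and columns.
-/

theorem det_eq_mul_det_of_col_zero_eq_mul {R : Type*} [CommRing R] {n : ℕ}
    (A : Matrix (Fin (n + 1)) (Fin (n + 1)) R) (c : Fin n → R)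
    (hc : ∀ i, A i.succ 0 = c i * A 0 0) :
    A.det = A 0 0 * (of fun i j : Fin n => A i.succ j.succ - c i * A 0 j.succ).det := by
  let rowCoeff : Fin (n + 1) → R := Fin.cons 0 c
  have clear_column : A.det = (of fun i j => A i j - rowCoeff i * A 0 j).det :=
    det_eq_of_forall_row_eq_smul_add_const rowCoeff 0 rfl fun i j => by simp [rowCoeff]
  rw [clear_column, det_succ_column_zero, Fin.sum_univ_succ, Finset.sum_eq_zero]
  · simp [rowCoeff, submatrix]
  · intro i _
    simp [rowCoeff, hc]

section projCauchy

variable {K ι κ : Type*} [Field K] {n : ℕ}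

/-- The Cauchy matrix of the points `(v i : w i)` and `(x j : y j)` of the projective line, in
homogeneous coordinates as for `Matrix.projVandermonde`; for `w = 1` and `y = 1` it is the usual
Cauchy matrix with entries `1 / (v i - x j)`. Entries with vanishing denominator are `0`. -/
def projCauchy (v w : ι → K) (x y : κ → K) : Matrix ι κ K :=
  of fun i j => 1 / (v i * y j - w i * x j)

theorem projCauchy_apply (v w : ι → K) (x y : κ → K) (i : ι) (j : κ) :
    projCauchy v w x y i j = 1 / (v i * y j - w i * x j) :=
  rfl

theorem projCauchy_schur_complement {v w : ι → K} {x y : κ → K} {i i₀ : ι} {j j₀ : κ}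
    (hij : v i * y j - w i * x j ≠ 0) (hij₀ : v i * y j₀ - w i * x j₀ ≠ 0)
    (hi₀j : v i₀ * y j - w i₀ * x j ≠ 0) :
    projCauchy v w x y i j -
        (v i₀ * y j₀ - w i₀ * x j₀) / (v i * y j₀ - w i * x j₀) * projCauchy v w x y i₀ j =
      (v i * w i₀ - w i * v i₀) / (v i * y j₀ - w i * x j₀) *
        ((x j₀ * y j - y j₀ * x j) / (v i₀ * y j - w i₀ * x j) * projCauchy v w x y i j) := by
  have plucker : (v i * y j₀ - w i * x j₀) * (v i₀ * y j - w i₀ * x j) -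
      (v i₀ * y j₀ - w i₀ * x j₀) * (v i * y j - w i * x j) =
      (v i * w i₀ - w i * v i₀) * (x j₀ * y j - y j₀ * x j) := by
    ring
  simp only [projCauchy_apply, mul_one_div, div_div]
  rw [div_sub_div _ _ hij (mul_ne_zero hij₀ hi₀j), div_mul_div_comm, one_mul, ← plucker]
  congr 1 <;> ring

theorem det_projCauchy_succ {v w x y : Fin (n + 1) → K}
    (h : ∀ i j, v i * y j - w i * x j ≠ 0) :
    (projCauchy v w x y).det =
      1 / (v 0 * y 0 - w 0 * x 0) *
        ((∏ i : Fin n, (v i.succ * w 0 - w i.succ * v 0) / (v i.succ * y 0 - w i.succ * x 0)) *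
          ((∏ j : Fin n, (x 0 * y j.succ - y 0 * x j.succ) / (v 0 * y j.succ - w 0 * x j.succ)) *
            (projCauchy (Fin.tail v) (Fin.tail w) (Fin.tail x) (Fin.tail y)).det)) := by
  rw [det_eq_mul_det_of_col_zero_eq_mul (projCauchy v w x y)
      fun i => (v 0 * y 0 - w 0 * x 0) / (v i.succ * y 0 - w i.succ * x 0)]
  · simp only [projCauchy_schur_complement (h _ _) (h _ 0) (h 0 _)]
    rw [← det_mul_row, ← det_mul_column]
    rfl
  · intro i
    rw [projCauchy_apply, projCauchy_apply, div_mul_div_cancel₀' (h 0 0)]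

theorem det_projCauchy {v w x y : Fin n → K} (h : ∀ i j, v i * y j - w i * x j ≠ 0) :
    (projCauchy v w x y).det =
      ((∏ i, ∏ j ∈ Finset.Ioi i, (v j * w i - w j * v i)) *
          ∏ i, ∏ j ∈ Finset.Ioi i, (x i * y j - y i * x j)) /
        ∏ i, ∏ j, (v i * y j - w i * x j) := by
  induction n with
  | zero => simp
  | succ n ih =>
    have tail_ne_zero : ∀ i j,
        Fin.tail v i * Fin.tail y j - Fin.tail w i * Fin.tail x j ≠ 0 :=
      fun i j => h i.succ j.succ
    rw [det_projCauchy_succ h, ih tail_ne_zero]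
    simp only [Fin.tail, Fin.prod_univ_succ (n := n), Fin.prod_Ioi_zero, Fin.prod_Ioi_succ,
      Finset.prod_mul_distrib, Finset.prod_div_distrib]
    simp only [div_eq_mul_inv, mul_inv]
    ring

end projCauchy

theorem det_one_div_sin_sub {n : ℕ} {α β : Fin n → ℝ} (h : ∀ i j, Real.sin (α i - β j) ≠ 0) :
    (of fun i j => 1 / Real.sin (α i - β j)).det =
      ((∏ i, ∏ j ∈ Finset.Ioi i, Real.sin (α j - α i)) *
          ∏ i, ∏ j ∈ Finset.Ioi i, Real.sin (β i - β j)) /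
        ∏ i, ∏ j, Real.sin (α i - β j) := by
  simp only [Real.sin_sub] at h ⊢
  exact det_projCauchy h

/-- **Lemma 3.10 (Berezin / Cauchy determinant)**: for real `ψ_j`, `φ_l` with all
`sin((ψ_j − φ_l)/2) ≠ 0`,
`∏_{j<j'} sin²((ψ_j−ψ_{j'})/2) · ∏_{l<l'} sin²((φ_l−φ_{l'})/2) / ∏_{j,l} sin²((ψ_j−φ_l)/2)`
equals `det(A)²`, where `A_{jl} = 1/sin((ψ_j − φ_l)/2)`. -/
theorem cauchy_sine_determinant (n : ℕ) (hn : 1 ≤ n) (ψ φ : Fin n → ℝ)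
    (h : ∀ j l : Fin n, Real.sin ((ψ j - φ l) / 2) ≠ 0) :
    ((∏ j : Fin n, ∏ j' ∈ Finset.Ioi j, (Real.sin ((ψ j - ψ j') / 2)) ^ 2) *
        (∏ l : Fin n, ∏ l' ∈ Finset.Ioi l, (Real.sin ((φ l - φ l') / 2)) ^ 2)) /
      (∏ j : Fin n, ∏ l : Fin n, (Real.sin ((ψ j - φ l) / 2)) ^ 2)
    = (Matrix.det (Matrix.of fun j l : Fin n => 1 / Real.sin ((ψ j - φ l) / 2))) ^ 2 := by
  have h_half : ∀ j l, Real.sin (ψ j / 2 - φ l / 2) ≠ 0 := fun j l => by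
    simpa only [sub_div] using h j l
  have sin_sq_sub_comm (a b : ℝ) : Real.sin (a - b) ^ 2 = Real.sin (b - a) ^ 2 := by
    rw [← neg_sub, Real.sin_neg, neg_sq]
  simp only [sub_div, det_one_div_sin_sub h_half, div_pow, mul_pow, ← Finset.prod_pow]
  simp only [sin_sq_sub_comm (ψ _ / 2) (ψ _ / 2)]
end

section
/- Let n ≥ 1 and let Ω ⊂ ℝⁿ × ℝⁿ be the open set of pairs (ψ, φ) = ((ψ_1,…,ψ_n),(φ_1,…,φ_n)) such that ψ_j − φ_l is not an integer multiple of 2π for all j, l. Define F : Ω → ℝ by F(ψ, φ) = det(A), where A is the n×n matrix with entries A_{jl} = 1/sin((ψ_j − φ_l)/2). Then for every integer k ≥ 1 and every point of Ω, ∑_{j=1}^{n} ∂^k F/∂ψ_j^k − (−1)^k ∑_{l=1}^{n} ∂^k F/∂φ_l^k = 0; i.e. F is annihilated by each of the radial operators D_k = ∑_j ∂^k/∂ψ_j^k − (−1)^k ∑_l ∂^k/∂φ_l^k. -/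
open Matrix

/-- The function `F(ψ, φ) = det(1/sin((ψ_j − φ_l)/2))` (the square root `J^{1/2}` of
Berezin's function for `m = n`). -/
noncomputable def sineDet (n : ℕ) (ψ φ : Fin n → ℝ) : ℝ :=
  Matrix.det (Matrix.of fun j l : Fin n => (Real.sin ((ψ j - φ l) / 2))⁻¹)

/-!
If `A j l = f (ψ j - φ l)`, then moving `ψ j` changes only row `j` of `A` and moving `φ l` changes
only column `l`. Since the determinant is linear in each row and in each column, `∂^k/∂ψ_j^k`
replaces row `j` of `A` by that of `B j l = f^(k) (ψ j - φ l)`, and `∂^k/∂φ_l^k` replaces column `l`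
by that of `(-1)^k B`. Replacing one row of `A` by that of `B`, summed over all rows, gives
`tr (adj A * B)`, and so does the same operation on columns. The sine determinant is the case
`f x = 1 / sin (x / 2)`.
-/

section Determinant

variable {ι R : Type*} [Fintype ι] [DecidableEq ι] [CommRing R]

theorem det_updateCol_eq_sum_adjugate_mul (A : Matrix ι ι R) (l : ι) (c : ι → R) :
    (A.updateCol l c).det = ∑ j, A.adjugate l j * c j := by
  rw [← cramer_apply, cramer_eq_adjugate_mulVec]
  rfl

theorem det_updateRow_eq_sum_adjugate_mul (A : Matrix ι ι R) (j : ι) (b : ι → R) :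
    (A.updateRow j b).det = ∑ l, A.adjugate l j * b l := by
  rw [← det_transpose, ← updateCol_transpose, det_updateCol_eq_sum_adjugate_mul]
  simp only [← adjugate_transpose, transpose_apply]

theorem sum_det_updateRow_eq_sum_det_updateCol (A B : Matrix ι ι R) :
    ∑ j, (A.updateRow j (B j)).det = ∑ l, (A.updateCol l (Bᵀ l)).det := by
  simp only [det_updateRow_eq_sum_adjugate_mul, det_updateCol_eq_sum_adjugate_mul, transpose_apply]
  exact Finset.sum_comm

end Determinant

section Update

variable {m n α β γ : Type*}

theorem of_update_left_eq_updateRow [DecidableEq m] (g : α → β → γ) (x : m → α) (y : n → β)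
    (i : m) (a : α) :
    of (fun i' j => g (Function.update x i a i') (y j)) =
      (of fun i' j => g (x i') (y j)).updateRow i fun j => g a (y j) := by
  ext i' j
  obtain rfl | hne := eq_or_ne i' i <;> simp [*]

theorem of_update_right_eq_updateCol [DecidableEq n] (g : α → β → γ) (x : m → α) (y : n → β)
    (j : n) (b : β) :
    of (fun i j' => g (x i) (Function.update y j b j')) =
      (of fun i j' => g (x i) (y j')).updateCol j fun i => g (x i) b := by
  ext i j'
  obtain rfl | hne := eq_or_ne j' j <;> simp [*]

end Update

section IteratedDeriv

variable {ι 𝕜 R : Type*} [Fintype ι] [DecidableEq ι] [NontriviallyNormedField 𝕜]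
  [NormedCommRing R] [NormedAlgebra 𝕜 R] {k : ℕ}

theorem iteratedDeriv_det_updateRow (A : Matrix ι ι R) (j : ι) {b : 𝕜 → ι → R} {x : 𝕜}
    (hb : ∀ l, ContDiffAt 𝕜 k (b · l) x) :
    iteratedDeriv k (fun t => (A.updateRow j (b t)).det) x =
      (A.updateRow j fun l => iteratedDeriv k (b · l) x).det := by
  simp only [det_updateRow_eq_sum_adjugate_mul]
  rw [iteratedDeriv_fun_sum fun l _ => contDiffAt_const.mul (hb l)]
  exact Finset.sum_congr rfl fun l _ => iteratedDeriv_const_mul _ (hb l)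

theorem iteratedDeriv_det_updateCol (A : Matrix ι ι R) (l : ι) {c : 𝕜 → ι → R} {x : 𝕜}
    (hc : ∀ j, ContDiffAt 𝕜 k (c · j) x) :
    iteratedDeriv k (fun t => (A.updateCol l (c t)).det) x =
      (A.updateCol l fun j => iteratedDeriv k (c · j) x).det := by
  simpa only [updateRow_transpose, det_transpose] using iteratedDeriv_det_updateRow Aᵀ l hc

variable {f : 𝕜 → R} {ψ φ : ι → 𝕜}

theorem iteratedDeriv_det_of_sub_update_left (j : ι)
    (hf : ∀ l, ContDiffAt 𝕜 k f (ψ j - φ l)) :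
    iteratedDeriv k (fun t => (of fun j' l => f (Function.update ψ j t j' - φ l)).det) (ψ j) =
      ((of fun j' l => f (ψ j' - φ l)).updateRow j
        fun l => iteratedDeriv k f (ψ j - φ l)).det := by
  have hrow : ∀ l, ContDiffAt 𝕜 k (fun t => f (t - φ l)) (ψ j) := fun l =>
    (hf l).comp (ψ j) (contDiffAt_id.sub contDiffAt_const)
  simp only [of_update_left_eq_updateRow (fun s t => f (s - t))]
  rw [iteratedDeriv_det_updateRow _ _ hrow]
  simp only [iteratedDeriv_comp_sub_const]

theorem iteratedDeriv_det_of_sub_update_right (l : ι)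
    (hf : ∀ j, ContDiffAt 𝕜 k f (ψ j - φ l)) :
    iteratedDeriv k (fun t => (of fun j l' => f (ψ j - Function.update φ l t l')).det) (φ l) =
      (-1) ^ k * ((of fun j l' => f (ψ j - φ l')).updateCol l
        fun j => iteratedDeriv k f (ψ j - φ l)).det := by
  have hcol : ∀ j, ContDiffAt 𝕜 k (fun t => f (ψ j - t)) (φ l) := fun j =>
    (hf j).comp (φ l) (contDiffAt_const.sub contDiffAt_id)
  have hsign : ∀ y : R, (-1 : 𝕜) ^ k • y = (-1 : R) ^ k * y := fun y => by
    simp [Algebra.smul_def]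
  simp only [of_update_right_eq_updateCol (fun s t => f (s - t))]
  rw [iteratedDeriv_det_updateCol _ _ hcol, ← det_updateCol_smul]
  simp only [iteratedDeriv_comp_const_sub, hsign]
  rfl

theorem sineDet_annihilated_by_Dk_general (hf : ∀ j l, ContDiffAt 𝕜 k f (ψ j - φ l)) :
    (∑ j, iteratedDeriv k
        (fun t => (of fun j' l => f (Function.update ψ j t j' - φ l)).det) (ψ j)) -
      (-1) ^ k * ∑ l, iteratedDeriv k
        (fun t => (of fun j l' => f (ψ j - Function.update φ l t l')).det) (φ l) = 0 := by
  have hψ := fun j => iteratedDeriv_det_of_sub_update_left j (hf j)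
  have hφ := fun l => iteratedDeriv_det_of_sub_update_right l (hf · l)
  have hsign : (-1 : R) ^ k * (-1) ^ k = 1 := by rw [← mul_pow, neg_one_mul, neg_neg, one_pow]
  simp only [hψ, hφ]
  rw [← Finset.mul_sum, ← mul_assoc, hsign, one_mul, sub_eq_zero]
  exact sum_det_updateRow_eq_sum_det_updateCol _ (of fun j l => iteratedDeriv k f (ψ j - φ l))

end IteratedDeriv

theorem sin_half_ne_zero {x : ℝ} (hx : ∀ m : ℤ, x ≠ 2 * Real.pi * m) : Real.sin (x / 2) ≠ 0 :=
  Real.sin_ne_zero_iff.2 fun m hm => hx m (by linarith)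

/-- **First step in the proof of Corollary 3.12**: on the open set where no
`ψ_j − φ_l` is an integer multiple of `2π`, the function
`F(ψ,φ) = det(1/sin((ψ_j − φ_l)/2))` is annihilated by each radial operator
`D_k = ∑_j ∂^k/∂ψ_j^k − (−1)^k ∑_l ∂^k/∂φ_l^k`. -/
theorem sineDet_annihilated_by_Dk (n : ℕ) (hn : 1 ≤ n) (k : ℕ) (hk : 1 ≤ k)
    (ψ φ : Fin n → ℝ)
    (h : ∀ j l : Fin n, ∀ m : ℤ, ψ j - φ l ≠ 2 * Real.pi * (m : ℝ)) :
    (∑ j : Fin n,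
        iteratedDeriv k (fun t : ℝ => sineDet n (Function.update ψ j t) φ) (ψ j)) -
      (-1 : ℝ) ^ k *
        ∑ l : Fin n,
          iteratedDeriv k (fun t : ℝ => sineDet n ψ (Function.update φ l t)) (φ l)
    = 0 := by
  exact sineDet_annihilated_by_Dk_general (f := fun x : ℝ => (Real.sin (x / 2))⁻¹) fun j l =>
    (by fun_prop : ContDiffAt ℝ k (fun x : ℝ => Real.sin (x / 2)) _).inv (sin_half_ne_zero (h j l))
end
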